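/- Let W = G(e,e,2) be the dihedral group of order 2e and q = 0. Order the irreducible characters as ε, ρ_1,…,ρ_m, 1 if e = 2m+1, and as ε, ρ_1,…,ρ_{m−1}, ε̂, ε̂', 1 if e = 2m. Then the block lower triangular solution P = (p_{z,z'}) of the matrix equation PΛᵗP = Ω (with diagonal blocks t^e, tI_k, 1 for the similarity classes ℱ_1 = {Λ(α_{0,0})}, ℱ_2 = {Λ(α_{0,j}) : 1 ≤ j ≤ e/2}, ℱ_3 = {Λ(α_0)} of a-values e, 1, 0) is given by: ᵗP_{21} = (t+t^{e−1}, t^2+t^{e−2},…, t^m+t^{m+1}) if e = 2m+1, and ᵗP_{21} = (t+t^{e−1},…, t^{m−1}+t^{m+1}, t^m, t^m) if e = 2m; p_{31} = 1, P_{32} = (1,0,…,0). Moreover λ_{11} = 1, the first row of Λ_{22} equals t^{−1}(t^e−1)·ᵗP_{21}, and λ_{33} = t^{e−2}(t^2−1)(t^e−1). -/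

import Mathlib

/-!
Common framework for formalizing T. Shoji, "Green functions associated to
complex reflection groups, II" (arXiv:math/0105053).

We model:
* `e`-partitions of `n` as functions `ZMod e → Multiset ℕ`;
* the complex reflection group `W̃ = G(e,1,n)` as the semidirect product
  `(Fin n → Multiplicative (ZMod e)) ⋊ Equiv.Perm (Fin n)`, and
  `W = G(e,p,n)` as the kernel of the mod-`p` sum character;
* the tensor space `V^{⊗n}` concretely via matrices indexed by
  `Fin n → (Σ k : ZMod e, Fin (m k))`;
* symmetric functions in the (finitely many, `m k ≥ n`) variables
  `x_i^{(k)}` in evaluated form, i.e. as functions of an assignment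
  `xv : (Σ k : ZMod e, Fin (m k)) → ℂ`.
-/

open scoped BigOperators

attribute [local instance] Classical.propDecidable

namespace GreenII

/-! ## Combinatorics of e-partitions -/

/-- An `e`-partition of `n`: a tuple of partitions (multisets of positive
integers) indexed by `ZMod e`, with total size `n`. -/
def IsEPartition (e : ℕ) [NeZero e] (n : ℕ) (α : ZMod e → Multiset ℕ) : Prop :=
  (∀ k, ∀ x ∈ α k, 0 < x) ∧ (∑ k : ZMod e, (α k).sum) = n

/-- The shift operator `θ = θ_p`, `θ(α)^{(k)} = α^{(k-d)}`. -/
def theta (e : ℕ) [NeZero e] (d : ℕ) (α : ZMod e → Multiset ℕ) : ZMod e → Multiset ℕ :=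
  fun k => α (k - (d : ZMod e))

/-- `c_{α,p}`: the size of the `θ`-orbit of `α`. -/
noncomputable def csize (e : ℕ) [NeZero e] (d : ℕ) (α : ZMod e → Multiset ℕ) : ℕ :=
  Function.minimalPeriod (theta e d) α

/-- `Δ(α) = ∑_k k · l(α^{(k)})`. -/
def Delta (e : ℕ) [NeZero e] (α : ZMod e → Multiset ℕ) : ℕ :=
  ∑ k : ZMod e, k.val * (α k).card

/-- `l(α) = ∑_k l(α^{(k)})`, the total number of parts. -/
def lenE (e : ℕ) [NeZero e] (α : ZMod e → Multiset ℕ) : ℕ :=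
  ∑ k : ZMod e, (α k).card

/-- `α` and `β` lie in the same `θ`-orbit. -/
def SameOrbit (e : ℕ) [NeZero e] (d : ℕ) (α β : ZMod e → Multiset ℕ) : Prop :=
  ∃ i, (theta e d)^[i] α = β

/-! ## The groups `W̃ = G(e,1,n)` and `W = G(e,p,n)` -/

/-- The "diagonal" part of `G(e,1,n)`. -/
abbrev NC (e n : ℕ) := Fin n → Multiplicative (ZMod e)

/-- The permutation action of `𝔖_n` on the diagonal part. -/
def permAut (e n : ℕ) (x : Equiv.Perm (Fin n)) : NC e n ≃* NC e n where
  toFun f := f ∘ ⇑x.symm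
  invFun f := f ∘ ⇑x
  left_inv f := by funext i; simp
  right_inv f := by funext i; simp
  map_mul' f g := rfl

def permHom (e n : ℕ) : Equiv.Perm (Fin n) →* MulAut (NC e n) where
  toFun x := permAut e n x
  map_one' := rfl
  map_mul' x y := rfl

/-- `W̃ = G(e,1,n) ≅ (ℤ/eℤ)^n ⋊ 𝔖_n`, with `w = x(a_1,…,a_n)` recorded as
`⟨(a_i), x⟩`. -/
abbrev Wt (e n : ℕ) := NC e n ⋊[permHom e n] Equiv.Perm (Fin n)

noncomputable instance WtFintype (e n : ℕ) [NeZero e] : Fintype (Wt e n) :=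
  Fintype.ofEquiv (NC e n × Equiv.Perm (Fin n))
    { toFun := fun x => ⟨x.1, x.2⟩
      invFun := fun x => (x.left, x.right)
      left_inv := fun _ => rfl
      right_inv := fun _ => rfl }

/-- The character `w ↦ ∑ a_i mod p` of `W̃`. -/
noncomputable def wsumHom (e p n : ℕ) (hp : p ∣ e) : Wt e n →* Multiplicative (ZMod p) where
  toFun w := Multiplicative.ofAdd (∑ i, ZMod.castHom hp (ZMod p) (w.left i).toAdd)
  map_one' := by simp
  map_mul' w w' := by
    have h : ∀ i, ((w * w').left i).toAdd
        = (w.left i).toAdd + (w'.left (w.right.symm i)).toAdd := fun _ => rfl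
    simp only [h, map_add, Finset.sum_add_distrib, ofAdd_add]
    congr 2
    exact Equiv.sum_comp w.right.symm
      (fun i => ZMod.castHom hp (ZMod p) ((w'.left i).toAdd))

/-- `W = G(e,p,n)`: the subgroup of `W̃` on which `∑ a_i ≡ 0 (mod p)`. -/
noncomputable def Wgrp (e p n : ℕ) (hp : p ∣ e) : Subgroup (Wt e n) :=
  (wsumHom e p n hp).ker

/-- `σ = t_1 ∈ W̃`. -/
def sigmaElt (e n : ℕ) [NeZero n] : Wt e n :=
  SemidirectProduct.inl (fun i => Multiplicative.ofAdd (if i = (0 : Fin n) then (1 : ZMod e) else 0))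

/-- membership in the coset `σ^q W`. -/
def inCoset (e p n : ℕ) [NeZero n] (hp : p ∣ e) (q : ℕ) (w : Wt e n) : Prop :=
  ∃ u ∈ Wgrp e p n hp, w = (sigmaElt e n) ^ q * u

/-- conjugacy under `W`. -/
def IsConjW (e p n : ℕ) (hp : p ∣ e) (w w' : Wt e n) : Prop :=
  ∃ u ∈ Wgrp e p n hp, u * w * u⁻¹ = w'

/-- The `e`-partition recording the conjugacy class of `w ∈ W̃`:
a `k`-cycle of length `l` (a cycle of the underlying permutation whose
accumulated `ZMod e`-color is `k`, fixed points counting as `1`-cycles)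
contributes a part `l` to the `k`-th component. -/
noncomputable def classOf (e n : ℕ) [NeZero e] (w : Wt e n) : ZMod e → Multiset ℕ := fun k =>
  ((w.right.cycleFactorsFinset.val.filter
      (fun c => (∑ i ∈ c.support, (w.left i).toAdd) = k)).map fun c => c.support.card)
    + Multiset.replicate
        ((Finset.univ.filter fun i : Fin n => w.right i = i ∧ (w.left i).toAdd = k).card) 1

/-! ### The standard class representative `w_α(b)` -/

/-- The list of (part, color) pairs of an `e`-partition. -/
noncomputable def partsList (e : ℕ) [NeZero e] (α : ZMod e → Multiset ℕ) : List (ℕ × ZMod e) :=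
  (Finset.univ : Finset (ZMod e)).toList.flatMap fun k => (α k).toList.map fun r => (r, k)

/-- the color datum of `w_α(b)`: each cycle carries its color at its first
point, except the first (exceptional) cycle, which carries `k - b` at its
first point and `b` at its last point. -/
noncomputable def aexc (e : ℕ) [NeZero e] (L : List (ℕ × ZMod e)) (b : ZMod e) :
    (Σ i : Fin L.length, Fin (L.get i).1) → ZMod e := fun x =>
  if (x.1 : ℕ) = 0 then
    (if (x.2 : ℕ) = 0 then (L.get x.1).2 - b else 0)
      + (if (x.2 : ℕ) = (L.get x.1).1 - 1 then b else 0)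
  else if (x.2 : ℕ) = 0 then (L.get x.1).2 else 0

/-- The standard representative `w_α(b) ∈ W̃` of the paper, 2.6: a product of
disjoint cycles matching `α`, of the form `t_{i_1}^k z` except for one
exceptional cycle `t_{i_1}^{k-b} t_{i_m}^{b} z`. -/
noncomputable def wrep (e n : ℕ) [NeZero e] (α : ZMod e → Multiset ℕ) (b : ZMod e) : Wt e n :=
  if hcard : Fintype.card (Σ i : Fin (partsList e α).length, Fin ((partsList e α).get i).1) = n then
    let φ := Fintype.equivFinOfCardEq hcard
    ⟨fun t => Multiplicative.ofAdd (aexc e (partsList e α) b (φ.symm t)),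
      φ.symm.trans ((Equiv.sigmaCongrRight fun _ => finRotate _).trans φ)⟩
  else 1

/-! ## The tensor space `V^{⊗n}` -/

/-- Basis index of `V = ⊕_k V_k`, `dim V_k = m k`. -/
abbrev BIdx (e : ℕ) [NeZero e] (m : ZMod e → ℕ) := Σ k : ZMod e, Fin (m k)

/-- Basis index of `V^{⊗n}`. -/
abbrev TIdx (e n : ℕ) [NeZero e] (m : ZMod e → ℕ) := Fin n → BIdx e m

/-- `ζ` raised to a `ZMod e` exponent. -/
noncomputable def zmpow (e : ℕ) [NeZero e] (ζ : ℂ) (c : ZMod e) : ℂ := ζ ^ c.val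

/-- the matrix of `w ∈ W̃` on `V^{⊗n}` (𝔖_n permutes the factors, and
`t_k` multiplies by `ζ^j` if the `k`-th factor lies in `V_j`). -/
noncomputable def rhoMat (e n : ℕ) [NeZero e] (ζ : ℂ) (m : ZMod e → ℕ) (w : Wt e n) :
    Matrix (TIdx e n m) (TIdx e n m) ℂ := fun b' b =>
  if b' = b ∘ ⇑w.right.symm then ∏ s, ζ ^ (((w.left s).toAdd.val) * (b' s).1.val) else 0

/-- The operator `D` (multiplication by `x_{i_1} ⋯ x_{i_n}`), with the
variables evaluated via `xv`. -/
noncomputable def Dmat (e n : ℕ) [NeZero e] (m : ZMod e → ℕ) (xv : BIdx e m → ℂ) :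
    Matrix (TIdx e n m) (TIdx e n m) ℂ :=
  Matrix.diagonal fun b => ∏ s, xv (b s)

/-- `τ` on the basis of `V`: `v_j^{(k)} ↦ v_j^{(k+d)}` (uses `m (k+d) = m k`). -/
def tauB (e : ℕ) [NeZero e] (d : ℕ) (m : ZMod e → ℕ) (hm : ∀ k, m (k + (d : ZMod e)) = m k) :
    BIdx e m → BIdx e m := fun b => ⟨b.1 + (d : ZMod e), Fin.cast (hm b.1).symm b.2⟩

/-- `g ↦ g^{⊗ n}`: the matrix of `g ∈ End V` acting diagonally on `V^{⊗n}`. -/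
noncomputable def tensorPow (e n : ℕ) [NeZero e] (m : ZMod e → ℕ)
    (g : Matrix (BIdx e m) (BIdx e m) ℂ) : Matrix (TIdx e n m) (TIdx e n m) ℂ :=
  Matrix.of fun b' b => ∏ s, g (b' s) (b s)

/-- the matrix of `τ` on `V`. -/
noncomputable def tauV (e : ℕ) [NeZero e] (d : ℕ) (m : ZMod e → ℕ)
    (hm : ∀ k, m (k + (d : ZMod e)) = m k) : Matrix (BIdx e m) (BIdx e m) ℂ :=
  fun b' b => if b' = tauB e d m hm b then 1 else 0

/-- the matrix of `τ` on `V^{⊗n}`. -/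
noncomputable def tauMat (e n : ℕ) [NeZero e] (d : ℕ) (m : ZMod e → ℕ)
    (hm : ∀ k, m (k + (d : ZMod e)) = m k) : Matrix (TIdx e n m) (TIdx e n m) ℂ :=
  tensorPow e n m (tauV e d m hm)

/-- a member of `G = GL_{m_0} × ⋯ × GL_{m_{e-1}}` (as an endomorphism of V,
invertibility stated separately). -/
def IsBlockDiag (e : ℕ) [NeZero e] (m : ZMod e → ℕ) (g : Matrix (BIdx e m) (BIdx e m) ℂ) : Prop :=
  ∀ b b' : BIdx e m, b.1 ≠ b'.1 → g b b' = 0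

/-- a block upper unitriangular matrix (product of root subgroups for the
positive roots of `G`). -/
def IsUpperUni (e : ℕ) [NeZero e] (m : ZMod e → ℕ) (g : Matrix (BIdx e m) (BIdx e m) ℂ) : Prop :=
  (∀ b, g b b = 1) ∧
    ∀ b b' : BIdx e m, b ≠ b' → ¬(b.1 = b'.1 ∧ b.2.val < b'.2.val) → g b b' = 0

/-! ## Symmetric functions (evaluated form) -/

/-- value of the variable `x_i^{(k)}` under the assignment `xv` (junk `0` out
of range). -/
noncomputable def xval (e : ℕ) [NeZero e] (m : ZMod e → ℕ) (xv : BIdx e m → ℂ)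
    (k : ZMod e) (i : ℕ) : ℂ :=
  if h : i < m k then xv ⟨k, ⟨i, h⟩⟩ else 0

/-- `h_j`: the order of the image of `j` in `ℤ/pℤ`. -/
noncomputable def hOrd (p j : ℕ) : ℕ := addOrderOf ((j : ZMod p))

/-- `j₁ d` where `j₁ = p / h_j`: the number of components of the variable
system `𝒳_j`. -/
noncomputable def Esys (p d j : ℕ) : ℕ := (p / hOrd p j) * d

/-- the variable `X_i^{(k)} = x_i^{(k)} x_i^{(k+jd)} ⋯ x_i^{(k+(h_j-1)jd)}`
of the system `𝒳_j`. -/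
noncomputable def Xvar (e : ℕ) [NeZero e] (p d : ℕ) (m : ZMod e → ℕ) (xv : BIdx e m → ℂ)
    (j k i : ℕ) : ℂ :=
  ∏ s ∈ Finset.range (hOrd p j), xval e m xv (((k + s * j * d : ℕ) : ZMod e)) i

/-- number of variables in the `k`-th component of any of the systems `𝒳_j`. -/
noncomputable def mmX (e : ℕ) [NeZero e] (m : ZMod e → ℕ) : ℕ → ℕ := fun k => m ((k : ℕ) : ZMod e)

/-- The variables of the system `𝒳_j`, as a doubly indexed family. -/
noncomputable def vvX (e : ℕ) [NeZero e] (p d : ℕ) (m : ZMod e → ℕ) (xv : BIdx e m → ℂ)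
    (j : ℕ) : ℕ → ℕ → ℂ := fun k i => Xvar e p d m xv j k i

/-- complete homogeneous symmetric polynomial `h_r` in `N` variables. -/
noncomputable def hcomp (N r : ℕ) (v : ℕ → ℂ) : ℂ :=
  ∑ c ∈ Finset.Nat.antidiagonalTuple N r, ∏ i : Fin N, v i ^ c i

/-- the parts of a partition in decreasing order (`0` beyond the length). -/
noncomputable def lamOf (μ : Multiset ℕ) (i : ℕ) : ℕ := ((μ.sort (· ≤ ·)).reverse).getD i 0

/-- Schur polynomial in `N` variables (Jacobi–Trudi). -/
noncomputable def schurFin (N : ℕ) (μ : Multiset ℕ) (v : ℕ → ℂ) : ℂ :=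
  Matrix.det (Matrix.of fun i j : Fin N =>
    if h : (0 : ℤ) ≤ (lamOf μ i + j : ℤ) - i then hcomp N ((lamOf μ i + j : ℤ) - i).toNat v
    else 0)

/-- monomial symmetric polynomial in `N` variables. -/
noncomputable def monoFin (N : ℕ) (μ : Multiset ℕ) (v : ℕ → ℂ) : ℂ :=
  ∑ c ∈ (Finset.Nat.antidiagonalTuple N μ.sum).filter
      (fun c => ((List.ofFn c : List ℕ) : Multiset ℕ).filter (fun x => 0 < x) = μ),
    ∏ i : Fin N, v i ^ c i

/-! ### generic families for a variable system with `E` components -/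

/-- `p_r^{(i)} = ∑_{k<E} u^{ik} p_r(x^{(k)})` (formula (2.2.2)/(2.4.2), with
`u` a primitive `E`-th root of unity), for the system of variables
`vv k i` (`k < E`, `i < mm k`); `p_0^{(i)} = 1`. -/
noncomputable def pGenSys (u : ℂ) (E : ℕ) (mm : ℕ → ℕ) (vv : ℕ → ℕ → ℂ) (i r : ℕ) : ℂ :=
  if r = 0 then 1 else ∑ k ∈ Finset.range E, u ^ (i * k) * ∑ s ∈ Finset.range (mm k), vv k s ^ r

/-- the power sum `p_γ` of an `E`-tuple of partitions (2.2.1). -/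
noncomputable def pAlphaSys (u : ℂ) (E : ℕ) (mm : ℕ → ℕ) (vv : ℕ → ℕ → ℂ)
    (γ : ℕ → Multiset ℕ) : ℂ :=
  ∏ k ∈ Finset.range E, ((γ k).map fun r => pGenSys u E mm vv k r).prod

/-- the Schur function `s_γ` of an `E`-tuple of partitions. -/
noncomputable def sAlphaSys (E : ℕ) (mm : ℕ → ℕ) (vv : ℕ → ℕ → ℂ) (γ : ℕ → Multiset ℕ) : ℂ :=
  ∏ k ∈ Finset.range E, schurFin (mm k) (γ k) (vv k)

/-- the monomial symmetric function `m_γ` of an `E`-tuple of partitions. -/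
noncomputable def mAlphaSys (E : ℕ) (mm : ℕ → ℕ) (vv : ℕ → ℕ → ℂ) (γ : ℕ → Multiset ℕ) : ℂ :=
  ∏ k ∈ Finset.range E, monoFin (mm k) (γ k) (vv k)

/-- the function `q_{r,±}^{(k)}(x;t)` of [S], (3.1.1). -/
noncomputable def qGenSys (t : ℂ) (E : ℕ) (mm : ℕ → ℕ) (vv : ℕ → ℕ → ℂ)
    (sgn : Bool) (k r : ℕ) : ℂ :=
  if r = 0 then 1 else
    let k' := if sgn then (k + 1) % E else (k + E - 1) % E
    ∑ i ∈ Finset.range (mm k),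
      vv k i ^ ((r : ℤ) + (mm k : ℤ) - 1 - (mm k' : ℤ)) *
        (∏ jj ∈ Finset.range (mm k'), (vv k i - t * vv k' jj)) /
        ∏ jj ∈ (Finset.range (mm k)).erase i, (vv k i - vv k jj)

/-- the function `q_{γ,±}(x;t)` of [S], (3.1.2). -/
noncomputable def qAlphaSys (t : ℂ) (E : ℕ) (mm : ℕ → ℕ) (vv : ℕ → ℕ → ℂ)
    (sgn : Bool) (γ : ℕ → Multiset ℕ) : ℂ :=
  ∏ k ∈ Finset.range E, ((γ k).map fun r => qGenSys t E mm vv sgn k r).prod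

/-- `z_β = ∏ i^{n_i} n_i!` for a partition `β = (1^{n_1} 2^{n_2} ⋯)`. -/
noncomputable def zPart (μ : Multiset ℕ) : ℂ :=
  ∏ i ∈ μ.toFinset, (i : ℂ) ^ (μ.count i) * (Nat.factorial (μ.count i) : ℂ)

/-- `z_γ(t) = z_γ ∏_{k,j} (1 - u^k t^{γ_j^{(k)}})⁻¹` for an `E`-tuple of
partitions `γ` (`u` the `E`-th root of unity), cf. (3.1.3). -/
noncomputable def zClassSys (u t : ℂ) (E : ℕ) (γ : ℕ → Multiset ℕ) : ℂ :=
  ((E : ℂ) ^ (∑ k ∈ Finset.range E, (γ k).card)) * (∏ k ∈ Finset.range E, zPart (γ k)) *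
    (∏ k ∈ Finset.range E, ((γ k).map fun r => (1 - u ^ k * t ^ r)).prod)⁻¹

/-! ### the `j`-th pieces attached to an e-partition -/

/-- the truncation `α{j} = (α^{(0)},…,α^{(j₁d-1)})` (used when `c_{α,p} ∣ j`). -/
noncomputable def braceF (e : ℕ) [NeZero e] (p d : ℕ) (j : ℕ) (α : ZMod e → Multiset ℕ) :
    ℕ → Multiset ℕ :=
  fun k => if k < Esys p d j then α ((k : ℕ) : ZMod e) else 0

/-- the `j₁d`-partition `α[j]` of `n/h` (condition (2.6.1)): component `k/h`
has parts `α_i^{(k)}/h`. -/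
noncomputable def bracketF (e : ℕ) [NeZero e] (p d : ℕ) (j : ℕ) (α : ZMod e → Multiset ℕ) :
    ℕ → Multiset ℕ :=
  fun k' => if k' < Esys p d j then (α (((hOrd p j * k' : ℕ) : ZMod e))).map (fun r => r / hOrd p j)
  else 0

/-- condition (2.6.1): `h_j` divides all parts `α_i^{(k)}`, and `h_j ∣ k`
whenever `α^{(k)} ≠ ∅`. -/
def Cond261 (e : ℕ) [NeZero e] (p j : ℕ) (α : ZMod e → Multiset ℕ) : Prop :=
  (∀ k, ∀ r ∈ α k, hOrd p j ∣ r) ∧ ∀ k : ZMod e, α k ≠ 0 → hOrd p j ∣ k.val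

/-- `s_{α{j}}(𝒳_j)`. -/
noncomputable def schurBrace (e : ℕ) [NeZero e] (p d : ℕ) (m : ZMod e → ℕ) (xv : BIdx e m → ℂ)
    (j : ℕ) (α : ZMod e → Multiset ℕ) : ℂ :=
  sAlphaSys (Esys p d j) (mmX e m) (vvX e p d m xv j) (braceF e p d j α)

/-- `p_{α[j]}(𝒳_j)` (2.6; the root of unity for the system `𝒳_j` is `ζ^h`). -/
noncomputable def pBracket (e : ℕ) [NeZero e] (p d : ℕ) (ζ : ℂ) (m : ZMod e → ℕ)
    (xv : BIdx e m → ℂ) (j : ℕ) (α : ZMod e → Multiset ℕ) : ℂ :=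
  pAlphaSys (ζ ^ hOrd p j) (Esys p d j) (mmX e m) (vvX e p d m xv j) (bracketF e p d j α)

/-- `l(α[j])`. -/
noncomputable def lenBracket (e : ℕ) [NeZero e] (p d : ℕ) (j : ℕ)
    (α : ZMod e → Multiset ℕ) : ℕ :=
  ∑ k ∈ Finset.range (Esys p d j), (bracketF e p d j α k).card

/-! ### Schur functions and power sums for `σ^q W` (2.10) -/

/-- the `j`-th component `s^j_{α,φ}` of the Schur function `𝐬_{α,φ}` for
`σ^q W` (2.10.1); the character `φ = φ_r` of `Γ_α = ⟨τ^c⟩ ≅ ℤ/(p/c)ℤ` is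
encoded by `r`, via `φ_r(τ^j) = ζ^{drj}` for `c ∣ j`. -/
noncomputable def sTuple (e : ℕ) [NeZero e] (p d q : ℕ) (ζ : ℂ) (m : ZMod e → ℕ)
    (xv : BIdx e m → ℂ) (α : ZMod e → Multiset ℕ) (r : ℕ) (j : ℕ) : ℂ :=
  if csize e d α ∣ j then
    ζ ^ (d * r * j) *
      ∑ i ∈ Finset.range (csize e d α),
        ζ ^ (q * i * d) * schurBrace e p d m xv j ((theta e d)^[i] α)
  else 0

/-- the `j`-th component `p^j_{β,b}` of the power sum `𝐩_{β,b}` for `σ^q W`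
(2.10.2). -/
noncomputable def pTuple (e : ℕ) [NeZero e] (p d : ℕ) (ζ : ℂ) (m : ZMod e → ℕ)
    (xv : BIdx e m → ℂ) (β : ZMod e → Multiset ℕ) (b : ZMod e) (j : ℕ) : ℂ :=
  if Cond261 e p j β then
    (hOrd p j : ℂ) ^ (lenBracket e p d j β) *
      zmpow e ζ (-(((Delta e β : ZMod e) + b) * ((j * d : ℕ) : ZMod e))) *
      pBracket e p d ζ m xv j β
  else 0

/-! ## The model for (extensions of) the irreducible characters of `W` -/

/-- trace of `f` on a subspace (junk `0` if not invariant). -/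
noncomputable def traceOn {V : Type*} [AddCommGroup V] [Module ℂ V]
    (S : Submodule ℂ V) (f : V →ₗ[ℂ] V) : ℂ :=
  if h : ∀ v ∈ S, f v ∈ S then LinearMap.trace ℂ S (f.restrict h) else 0

/-- the scalar by which the torus element `diag dv ∈ G` acts on a highest
weight vector of weight `α`. -/
noncomputable def weightOf (e : ℕ) [NeZero e] (m : ZMod e → ℕ) (α : ZMod e → Multiset ℕ)
    (dv : BIdx e m → ℂ) : ℂ :=
  ∏ b : BIdx e m, dv b ^ (lamOf (α b.1) b.2.val)

/-- the space of highest weight vectors of weight `α` in `V^{⊗n}`: the model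
for the irreducible `W̃`-module `Z_α` (1.3.1, 1.4). -/
noncomputable def hwSubmodule (e n : ℕ) [NeZero e] (m : ZMod e → ℕ)
    (α : ZMod e → Multiset ℕ) : Submodule ℂ (TIdx e n m → ℂ) :=
  (⨅ g ∈ {g | IsUpperUni e m g},
      Module.End.eigenspace (Matrix.mulVecLin (tensorPow e n m g)) 1) ⊓
    ⨅ dv : BIdx e m → ℂ,
      Module.End.eigenspace (Matrix.mulVecLin (tensorPow e n m (Matrix.diagonal dv)))
        (weightOf e m α dv)

/-- the model for the irreducible `W`-module `Z_{α,φ_r}`: the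
`φ_r(τ^c)`-eigenspace of `τ^c` on `Z_α`, where `c = c_{α,p}` and
`φ_r(τ^c) = ζ^{cdr}`. -/
noncomputable def ZSub (e n : ℕ) [NeZero e] (d : ℕ) (m : ZMod e → ℕ)
    (hm : ∀ k, m (k + (d : ZMod e)) = m k) (ζ : ℂ) (α : ZMod e → Multiset ℕ) (r : ℕ) :
    Submodule ℂ (TIdx e n m → ℂ) :=
  hwSubmodule e n m α ⊓
    Module.End.eigenspace (Matrix.mulVecLin ((tauMat e n d m hm) ^ (csize e d α)))
      (ζ ^ (csize e d α * d * r))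

/-- The model for the irreducible character `χ^{α,φ_r}` of `W` and for its
chosen extension `χ̃^{α,φ_r}` to `⟨σ^q⟩ ⋉ W`: the trace of `w` on the model
`Z_{α,φ_r} ⊆ V^{⊗n}`. -/
noncomputable def charExt (e n : ℕ) [NeZero e] (d : ℕ) (m : ZMod e → ℕ)
    (hm : ∀ k, m (k + (d : ZMod e)) = m k) (ζ : ℂ) (α : ZMod e → Multiset ℕ) (r : ℕ)
    (w : Wt e n) : ℂ :=
  traceOn (ZSub e n d m hm ζ α r) (Matrix.mulVecLin (rhoMat e n ζ m w))

/-! ## symbols, a-function, similarity; the reflection representation -/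

/-- the multiset of entries of the symbol `Λ(α) = α + Λ⁰` of type `(r,0)`. -/
noncomputable def entriesSym (e : ℕ) [NeZero e] (m : ZMod e → ℕ) (rsym : ℕ)
    (α : ZMod e → Multiset ℕ) : Multiset ℕ :=
  (Finset.univ : Finset (BIdx e m)).val.map fun b =>
    lamOf (α b.1) b.2.val + rsym * (m b.1 - 1 - b.2.val)

noncomputable def pairMinSum (M : Multiset ℕ) : ℕ :=
  (M.bind fun a => M.map fun b => min a b).sum

/-- the `a`-function (3.5.2) on symbols of type `(rsym, 0)`. -/
noncomputable def aVal (e : ℕ) [NeZero e] (m : ZMod e → ℕ) (rsym : ℕ)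
    (α : ZMod e → Multiset ℕ) : ℕ :=
  pairMinSum (entriesSym e m rsym α) - pairMinSum (entriesSym e m rsym (fun _ => 0))

/-- similarity of symbols: equality of entries with multiplicities. -/
def SimSym (e : ℕ) [NeZero e] (m : ZMod e → ℕ) (rsym : ℕ) (α β : ZMod e → Multiset ℕ) : Prop :=
  entriesSym e m rsym α = entriesSym e m rsym β

/-- the reflection representation `M = ℂ^n` of `W̃` (`w(e_i) = ζ^{a_i} e_{x(i)}`). -/
noncomputable def refMat (e n : ℕ) [NeZero e] (ζ : ℂ) (w : Wt e n) :
    Matrix (Fin n) (Fin n) ℂ :=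
  fun i' i => if i' = w.right i then zmpow e ζ (w.left i').toAdd else 0

/-- The functional `R_q(f)` of (4.2.1), for a function `f` on the coset `σ^q W`. -/
noncomputable def Rq (e p d n : ℕ) [NeZero e] [NeZero n] (hp : p ∣ e) (ζ t : ℂ) (q : ℕ)
    (f : Wt e n → ℂ) : ℂ :=
  (ζ ^ (q * d) * t ^ (d * n) - 1) * (∏ i ∈ Finset.Icc 1 (n - 1), (t ^ (e * i) - 1)) *
    (Nat.card (Wgrp e p n hp) : ℂ)⁻¹ *
    ∑ w ∈ Finset.univ.filter (fun w => inCoset e p n hp q w),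
      (refMat e n ζ w).det * f w / (t • (1 : Matrix (Fin n) (Fin n) ℂ) - refMat e n ζ w).det

/-- `N^*`: the number of reflections in `W`. -/
noncomputable def Nstar (e p n : ℕ) [NeZero e] (hp : p ∣ e) (ζ : ℂ) : ℕ :=
  Nat.card {w : Wt e n // w ∈ Wgrp e p n hp ∧ w ≠ 1 ∧ (refMat e n ζ w - 1).rank = 1}

end GreenII
namespace GreenII

/-- the number of "middle" indices for `G(e,e,2)`:
`k = (e-1)/2` (`e` odd), `k = e/2 + 1` (`e` even). -/
def dihedralK (e : ℕ) : ℕ := if Even e then e / 2 + 1 else (e - 1) / 2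

/-- the parametrization of `𝒫̃_W^0` for `W = G(e,e,2)` in the order
`ε, ρ_1, …, (ρ_m | ρ_{m-1}, ε̂, ε̂'), 1`:
`0 ↦ α_{0,0} = (1²;-;…)`, `i ↦ α_{0,i}` (with, for even `e`, the two
characters `φ = ±1` of `Γ_{α_{0,e/2}}` at `i = e/2, e/2+1`), and the last
index `↦ α_0 = (2;-;…)`. -/
noncomputable def dihedralIdx (e : ℕ) [NeZero e] (i : ℕ) : (ZMod e → Multiset ℕ) × ℕ :=
  if i = 0 then (fun kk => if kk = 0 then ({1, 1} : Multiset ℕ) else 0, 0)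
  else if i = dihedralK e + 1 then (fun kk => if kk = 0 then ({2} : Multiset ℕ) else 0, 0)
  else if Even e ∧ i = e / 2 + 1 then
    (fun kk => if kk = 0 ∨ kk = ((e / 2 : ℕ) : ZMod e) then ({1} : Multiset ℕ) else 0, 1)
  else (fun kk => if kk = 0 ∨ kk = ((min i (e / 2) : ℕ) : ZMod e) then ({1} : Multiset ℕ)
    else 0, 0)

/-- similarity class: `0` for `ℱ_1 = {Λ(α_{0,0})}` (a-value `e`), `1` for
`ℱ_2 = {Λ(α_{0,j})}` (a-value `1`), `2` for `ℱ_3 = {Λ(α_0)}` (a-value `0`). -/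
def dihedralClass (e i : ℕ) : ℕ :=
  if i = 0 then 0 else if i = dihedralK e + 1 then 2 else 1


/-! ## Traces on parametrized subspaces -/

lemma traceOn_range {V U : Type*} [AddCommGroup V] [Module ℂ V] [AddCommGroup U] [Module ℂ U]
    (φ : U →ₗ[ℂ] V) (hφ : Function.Injective φ) (S : Submodule ℂ V)
    (hS : S = LinearMap.range φ) (f : V →ₗ[ℂ] V) (g : U →ₗ[ℂ] U)
    (h : ∀ u, f (φ u) = φ (g u)) : traceOn S f = LinearMap.trace ℂ U g := by
  subst hS
  have hinv : ∀ v ∈ LinearMap.range φ, f v ∈ LinearMap.range φ := by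
    rintro _ ⟨u, rfl⟩
    exact ⟨g u, (h u).symm⟩
  unfold traceOn
  rw [dif_pos hinv]
  have : f.restrict hinv = (LinearEquiv.ofInjective φ hφ).conj g := by
    ext ⟨_, u, rfl⟩
    have h1 : (⟨φ u, u, rfl⟩ : LinearMap.range φ) = LinearEquiv.ofInjective φ hφ u := rfl
    rw [h1, LinearEquiv.conj_apply_apply, LinearEquiv.symm_apply_apply]
    exact h u
  rw [this, LinearMap.trace_conj']

lemma traceOn_line {V : Type*} [AddCommGroup V] [Module ℂ V] (v : V) (hv : v ≠ 0)
    (S : Submodule ℂ V) (hS : ∀ w, w ∈ S ↔ ∃ x : ℂ, w = x • v) (f : V →ₗ[ℂ] V) (c : ℂ)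
    (h : f v = c • v) : traceOn S f = c := by
  rw [traceOn_range (LinearMap.toSpanSingleton ℂ V v) (LinearMap.ker_eq_bot.mp (LinearMap.ker_toSpanSingleton ℂ hv)) S _ f (c • LinearMap.id)]
  · simp
  · intro u
    simp [h, smul_smul, mul_comm]
  · ext w
    rw [hS]
    simp [LinearMap.mem_range, eq_comm]

/-! ## Matrices acting on elementary tensors -/

section tensors

variable {e : ℕ} [NeZero e] {m : ZMod e → ℕ}

/-- elementary tensor -/
noncomputable def et (p q : BIdx e m) : TIdx e 2 m → ℂ := Pi.single ![p, q] 1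

lemma tidx_ext {b b' : TIdx e 2 m} (h0 : b 0 = b' 0) (h1 : b 1 = b' 1) : b = b' := by
  funext i
  fin_cases i
  · exact h0
  · exact h1

lemma tensorPow_et (g : Matrix (BIdx e m) (BIdx e m) ℂ) (p q : BIdx e m) :
    (tensorPow e 2 m g).mulVec (et p q) = fun b => g (b 0) p * g (b 1) q := by
  unfold et
  rw [Matrix.mulVec_single_one]
  ext b
  simp [tensorPow, Matrix.col, Fin.prod_univ_two]

lemma et_apply (p q : BIdx e m) (b : TIdx e 2 m) :
    et p q b = if b 0 = p ∧ b 1 = q then 1 else 0 := by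
  unfold et
  rw [Pi.single_apply]
  congr 1
  simp only [eq_iff_iff]
  constructor
  · rintro rfl; simp
  · rintro ⟨rfl, rfl⟩; exact tidx_ext rfl rfl

lemma bidx_ext {b b' : BIdx e m} (h1 : b.1 = b'.1) (h2 : b.2.val = b'.2.val) : b = b' := by
  obtain ⟨k, j⟩ := b
  obtain ⟨k', j'⟩ := b'
  obtain rfl : k = k' := h1
  congr
  exact Fin.ext h2

lemma mem_hw_iff (α : ZMod e → Multiset ℕ) (v : TIdx e 2 m → ℂ) :
    v ∈ hwSubmodule e 2 m α ↔
      (∀ g, IsUpperUni e m g → (tensorPow e 2 m g).mulVec v = v) ∧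
      ∀ dv, ∀ b : TIdx e 2 m, dv (b 0) * dv (b 1) * v b = weightOf e m α dv * v b := by
  unfold hwSubmodule
  simp only [Submodule.mem_inf, Submodule.mem_iInf, Set.mem_ofPred_eq,
    Module.End.mem_eigenspace_iff, Matrix.mulVecLin_apply, one_smul]
  refine and_congr Iff.rfl (forall_congr' fun dv => ?_)
  have : tensorPow e 2 m (Matrix.diagonal dv) = Matrix.diagonal fun b => dv (b 0) * dv (b 1) := by
    ext b b'
    simp only [tensorPow, Matrix.of_apply, Matrix.diagonal_apply, Fin.prod_univ_two]
    by_cases h : b = b'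
    · subst h; simp
    · rw [if_neg h]
      by_cases h0 : b 0 = b' 0
      · have h1 : b 1 ≠ b' 1 := by
          intro h1; exact h (tidx_ext h0 h1)
        simp [h1]
      · simp [h0]
  rw [this, funext_iff]
  simp [Matrix.mulVec_diagonal]

lemma hw_support (α : ZMod e → Multiset ℕ) (p q : BIdx e m)
    (hw : ∀ dv, weightOf e m α dv = dv p * dv q) (v : TIdx e 2 m → ℂ)
    (h : ∀ dv, ∀ b : TIdx e 2 m, dv (b 0) * dv (b 1) * v b = weightOf e m α dv * v b)
    (b : TIdx e 2 m) (hb : v b ≠ 0) : (b 0 = p ∧ b 1 = q) ∨ (b 0 = q ∧ b 1 = p) := by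
  have h' : ∀ dv : BIdx e m → ℂ, dv (b 0) * dv (b 1) = dv p * dv q := fun dv => by
    have := h dv b
    rw [hw] at this
    exact mul_right_cancel₀ hb this
  have h1 := h' (fun c => if c = p ∨ c = q then 1 else 0)
  have h2 := h' (fun c => if c = p then 1 else 0)
  have h3 := h' (fun c => if c = q then 1 else 0)
  simp only [true_or, or_true, if_true, mul_one] at h1 h2 h3
  by_cases hpq : p = q
  · subst hpq; simp at h1; grind
  · grind

lemma hw_mem_of (α : ZMod e → Multiset ℕ) (p q : BIdx e m)
    (hw : ∀ dv, weightOf e m α dv = dv p * dv q) (x y : ℂ)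
    (hg : ∀ g, IsUpperUni e m g → ∀ b : TIdx e 2 m,
      x * (g (b 0) p * g (b 1) q) + y * (g (b 0) q * g (b 1) p) = (x • et p q + y • et q p) b) :
    x • et p q + y • et q p ∈ hwSubmodule e 2 m α := by
  rw [mem_hw_iff]
  constructor
  · intro g hgg
    rw [Matrix.mulVec_add, Matrix.mulVec_smul, Matrix.mulVec_smul, tensorPow_et, tensorPow_et]
    ext b
    rw [← hg g hgg b]
    simp
  · intro dv b
    rw [hw]
    simp only [Pi.add_apply, Pi.smul_apply, et_apply, smul_eq_mul]
    split_ifs with h1 h2 h2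
    · rw [h1.1, h1.2]
    · rw [h1.1, h1.2]
    · rw [h2.1, h2.2]; ring
    · simp

lemma upper_top {g : Matrix (BIdx e m) (BIdx e m) ℂ} (hg : IsUpperUni e m g) (p : BIdx e m)
    (hp : p.2.val = 0) (c : BIdx e m) : g c p = if c = p then 1 else 0 := by
  split_ifs with h
  · rw [h]; exact hg.1 p
  · exact hg.2 c p h (by omega)

lemma hw_form (α : ZMod e → Multiset ℕ) (p q : BIdx e m) (hpq : p ≠ q)
    (hw : ∀ dv, weightOf e m α dv = dv p * dv q) (v : TIdx e 2 m → ℂ)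
    (hv : v ∈ hwSubmodule e 2 m α) : ∃ x y : ℂ, v = x • et p q + y • et q p := by
  rw [mem_hw_iff] at hv
  have hs := hw_support α p q hw v hv.2
  refine ⟨v ![p, q], v ![q, p], ?_⟩
  have key : ∀ (b : TIdx e 2 m) p q, b 0 = p → b 1 = q → b = ![p, q] := by
    rintro b _ _ rfl rfl; exact tidx_ext rfl rfl
  ext b
  simp only [Pi.add_apply, Pi.smul_apply, et_apply, smul_eq_mul]
  by_cases hb : v b = 0
  · rw [hb]
    by_cases h1 : b 0 = p ∧ b 1 = q
    · have := key b _ _ h1.1 h1.2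
      rw [← this, hb]
      have h2 : ¬ (b 0 = q ∧ b 1 = p) := fun h2 => hpq (h1.1.symm.trans h2.1)
      simp [h2]
    · by_cases h2 : b 0 = q ∧ b 1 = p
      · have := key b _ _ h2.1 h2.2
        rw [← this, hb, if_neg h1]; simp
      · simp [h1, h2]
  · rcases hs b hb with h | h
    · have := key b _ _ h.1 h.2
      subst this; simp [hpq]
    · have := key b _ _ h.1 h.2
      subst this; simp [hpq.symm]

/-- both of `p`, `q` tops of different blocks -/
lemma hw_iff_tops (α : ZMod e → Multiset ℕ) (p q : BIdx e m) (hpq : p ≠ q)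
    (hp : p.2.val = 0) (hq : q.2.val = 0)
    (hw : ∀ dv, weightOf e m α dv = dv p * dv q) (v : TIdx e 2 m → ℂ) :
    v ∈ hwSubmodule e 2 m α ↔ ∃ x y : ℂ, v = x • et p q + y • et q p := by
  refine ⟨hw_form α p q hpq hw v, ?_⟩
  rintro ⟨x, y, rfl⟩
  apply hw_mem_of α p q hw
  intro g hg b
  rw [upper_top hg p hp, upper_top hg p hp, upper_top hg q hq, upper_top hg q hq]
  simp only [Pi.add_apply, Pi.smul_apply, et_apply, smul_eq_mul]
  by_cases a1 : b 0 = p <;> by_cases a2 : b 0 = q <;> by_cases a3 : b 1 = p <;>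
        by_cases a4 : b 1 = q <;> simp only [a1, a2, a3, a4] <;> simp [hpq, hpq.symm]

/-- `p = q` a top -/
lemma hw_iff_sq (α : ZMod e → Multiset ℕ) (p : BIdx e m)
    (hp : p.2.val = 0)
    (hw : ∀ dv, weightOf e m α dv = dv p * dv p) (v : TIdx e 2 m → ℂ) :
    v ∈ hwSubmodule e 2 m α ↔ ∃ x : ℂ, v = x • et p p := by
  constructor
  · intro hv
    rw [mem_hw_iff] at hv
    have hs := hw_support α p p hw v hv.2
    refine ⟨v ![p, p], ?_⟩
    ext b
    simp only [Pi.smul_apply, et_apply, smul_eq_mul]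
    split_ifs with h
    · have : b = ![p, p] := tidx_ext h.1 h.2
      rw [this, mul_one]
    · rw [mul_zero]; by_contra hb; exact h (by simpa using hs b hb)
  · rintro ⟨x, rfl⟩
    have := hw_mem_of α p p hw x 0 ?_
    · simpa using this
    · intro g hg b
      rw [upper_top hg p hp, upper_top hg p hp]
      simp only [Pi.add_apply, Pi.smul_apply, et_apply, smul_eq_mul]
      by_cases a1 : b 0 = p <;> by_cases a3 : b 1 = p <;> simp [a1, a3]

/-- `p`, `q` the first two in one block -/
lemma hw_iff_wedge (α : ZMod e → Multiset ℕ) (p q : BIdx e m) (h1 : p.1 = q.1)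
    (hp : p.2.val = 0) (hq : q.2.val = 1)
    (hw : ∀ dv, weightOf e m α dv = dv p * dv q) (v : TIdx e 2 m → ℂ) :
    v ∈ hwSubmodule e 2 m α ↔ ∃ x : ℂ, v = x • (et p q - et q p) := by
  have hpq : p ≠ q := by rintro rfl; omega
  constructor
  · intro hv
    obtain ⟨x, y, hxy⟩ := hw_form α p q hpq hw v hv
    rw [mem_hw_iff] at hv
    have h2 := hv.1 (Matrix.of fun b b' => if b = b' ∨ (b = p ∧ b' = q) then 1 else 0) ?_
    · rw [hxy, Matrix.mulVec_add, Matrix.mulVec_smul, Matrix.mulVec_smul, tensorPow_et, tensorPow_et] at h2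
      have h3 := congrFun h2 ![p, p]
      simp [et_apply, hpq] at h3
      refine ⟨x, ?_⟩
      rw [hxy, eq_neg_of_add_eq_zero_right h3, smul_sub, neg_smul, sub_eq_add_neg]
    · refine ⟨fun b => by simp, fun b b' hbb hn => ?_⟩
      rw [Matrix.of_apply, if_neg]
      rintro (h | ⟨rfl, rfl⟩)
      · exact hbb h
      · exact hn ⟨h1, by omega⟩
  · rintro ⟨x, rfl⟩
    have := hw_mem_of α p q hw x (-x) ?_
    · rw [smul_sub, sub_eq_add_neg, ← neg_smul]; exact this
    · intro g hg b
      have hgq : ∀ c, g c q = if c = q then 1 else if c = p then g p q else 0 := by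
        intro c
        split_ifs with h h'
        · rw [h]; exact hg.1 q
        · rw [h']
        · apply hg.2 c q h
          rintro ⟨h3, h4⟩
          exact h' (bidx_ext (h3.trans h1.symm) (by omega))
      rw [upper_top hg p hp, upper_top hg p hp, hgq (b 0), hgq (b 1)]
      generalize g p q = z
      simp only [Pi.add_apply, Pi.smul_apply, et_apply, smul_eq_mul]
      by_cases a1 : b 0 = p <;> by_cases a2 : b 0 = q <;> by_cases a3 : b 1 = p <;>
        by_cases a4 : b 1 = q <;> simp only [a1, a2, a3, a4] <;> simp [hpq, hpq.symm]
end tensors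

lemma lamOf_zero (i : ℕ) : lamOf 0 i = 0 := by simp [lamOf]

lemma lamOf_singleton (a i : ℕ) : lamOf {a} i = if i = 0 then a else 0 := by
  rcases i with _ | i <;> simp [lamOf]

lemma lamOf_pair (i : ℕ) : lamOf {1, 1} i = if i = 0 ∨ i = 1 then 1 else 0 := by
  have : ({1, 1} : Multiset ℕ).sort (· ≤ ·) = [1, 1] := by
    have h : ({1, 1} : Multiset ℕ).sort (· ≤ ·) = List.replicate 2 1 := by
      rw [List.eq_replicate_iff]
      constructor
      · simp
      · intro b hb
        simpa using hb
    rw [h]; rfl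
  unfold lamOf
  rw [this]
  rcases i with _ | _ | i <;> simp

section chars

variable {e : ℕ} [NeZero e] {m : ZMod e → ℕ}

lemma weight_pair (α : ZMod e → Multiset ℕ) (p q : BIdx e m) (hpq : p ≠ q)
    (h : ∀ b : BIdx e m, lamOf (α b.1) b.2.val = if b = p ∨ b = q then 1 else 0)
    (dv : BIdx e m → ℂ) : weightOf e m α dv = dv p * dv q := by
  unfold weightOf
  rw [Finset.prod_eq_mul p q hpq]
  · rw [h, h]; simp
  · intro c _ hc
    rw [h, if_neg (by tauto), pow_zero]
  · simp
  · simp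

lemma weight_sq (α : ZMod e → Multiset ℕ) (p : BIdx e m)
    (h : ∀ b : BIdx e m, lamOf (α b.1) b.2.val = if b = p then 2 else 0)
    (dv : BIdx e m → ℂ) : weightOf e m α dv = dv p * dv p := by
  unfold weightOf
  rw [Finset.prod_eq_single p]
  · rw [h]; simp [sq]
  · intro c _ hc
    rw [h, if_neg hc, pow_zero]
  · simp

lemma tauV_et (hm : ∀ k, m (k + ((1 : ℕ) : ZMod e)) = m k) (p q : BIdx e m) :
    (tauMat e 2 1 m hm).mulVec (et p q) = et (tauB e 1 m hm p) (tauB e 1 m hm q) := by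
  unfold tauMat
  rw [tensorPow_et]
  ext b
  rw [et_apply]
  simp only [tauV]
  by_cases h1 : b 0 = tauB e 1 m hm p <;> by_cases h2 : b 1 = tauB e 1 m hm q <;> simp [h1, h2]

lemma tau_pow_et (hm : ∀ k, m (k + ((1 : ℕ) : ZMod e)) = m k) (c : ℕ) (p q : BIdx e m) :
    ((tauMat e 2 1 m hm) ^ c).mulVec (et p q)
      = et ((tauB e 1 m hm)^[c] p) ((tauB e 1 m hm)^[c] q) := by
  induction c with
  | zero => simp
  | succ c ih =>
    rw [pow_succ', ← Matrix.mulVec_mulVec, ih, tauV_et, Function.iterate_succ_apply',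
      Function.iterate_succ_apply']

lemma tauB_iter (hm : ∀ k, m (k + ((1 : ℕ) : ZMod e)) = m k) (c : ℕ) (p : BIdx e m) :
    ((tauB e 1 m hm)^[c] p).1 = p.1 + (c : ZMod e) ∧ ((tauB e 1 m hm)^[c] p).2.val = p.2.val := by
  induction c with
  | zero => simp
  | succ c ih =>
    rw [Function.iterate_succ_apply']
    constructor
    · simp [tauB, ih.1, add_assoc]
    · simp [tauB, ih.2]

lemma tauB_iter_of_dvd (hm : ∀ k, m (k + ((1 : ℕ) : ZMod e)) = m k) (c : ℕ) (hc : e ∣ c)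
    (p : BIdx e m) : (tauB e 1 m hm)^[c] p = p := by
  obtain ⟨h1, h2⟩ := tauB_iter hm c p
  refine bidx_ext ?_ h2
  rw [h1, (ZMod.natCast_eq_zero_iff c e).mpr hc, add_zero]

lemma theta_iter (α : ZMod e → Multiset ℕ) (c : ℕ) (k : ZMod e) :
    (theta e 1)^[c] α k = α (k - (c : ZMod e)) := by
  induction c generalizing k with
  | zero => simp
  | succ c ih =>
    rw [Function.iterate_succ_apply']
    simp only [theta]
    rw [ih]
    congr 1
    push_cast
    ring

lemma dvd_csize (α : ZMod e → Multiset ℕ) (c : ℕ)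
    (h : ∀ n : ℕ, (∀ k, α (k - (n : ZMod e)) = α k) → c ∣ n) : c ∣ csize e 1 α := by
  apply h
  intro k
  have := Function.isPeriodicPt_minimalPeriod (theta e 1) α
  rw [← theta_iter (e := e) α]
  exact congrFun this k

lemma csize_dvd (α : ZMod e → Multiset ℕ) (c : ℕ)
    (h : ∀ k, α (k - (c : ZMod e)) = α k) : csize e 1 α ∣ c := by
  apply Function.IsPeriodicPt.minimalPeriod_dvd
  funext k
  rw [theta_iter, h]

/-- If `e ∣ csize α` the `τ`-condition is automatic on tensors of the given form. -/
lemma ZSub_iff (hm : ∀ k, m (k + ((1 : ℕ) : ZMod e)) = m k) (ζ : ℂ)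
    (α : ZMod e → Multiset ℕ) (hc : e ∣ csize e 1 α)
    (hform : ∀ v ∈ hwSubmodule e 2 m α, ∃ (p q : BIdx e m) (x y : ℂ), v = x • et p q + y • et q p)
    (v : TIdx e 2 m → ℂ) :
    v ∈ ZSub e 2 1 m hm ζ α 0 ↔ v ∈ hwSubmodule e 2 m α := by
  unfold ZSub
  rw [Submodule.mem_inf, and_iff_left_iff_imp]
  intro hv
  obtain ⟨p, q, x, y, rfl⟩ := hform v hv
  rw [Module.End.mem_eigenspace_iff, Matrix.mulVecLin_apply, Matrix.mulVec_add,
    Matrix.mulVec_smul, Matrix.mulVec_smul, tau_pow_et, tau_pow_et,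
    tauB_iter_of_dvd hm _ hc, tauB_iter_of_dvd hm _ hc]
  simp

/-! ### the elements of `W` -/

/-- rotations -/
def rotE (e : ℕ) (a : ZMod e) : Wt e 2 :=
  ⟨![Multiplicative.ofAdd a, Multiplicative.ofAdd (-a)], 1⟩

/-- reflections -/
def refE (e : ℕ) (a : ZMod e) : Wt e 2 :=
  ⟨![Multiplicative.ofAdd a, Multiplicative.ofAdd (-a)], Equiv.swap 0 1⟩

lemma rho_rot_et (ζ : ℂ) (a : ZMod e) (p q : BIdx e m) :
    (rhoMat e 2 ζ m (rotE e a)).mulVec (et p q) =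
      (ζ ^ (a.val * p.1.val) * ζ ^ ((-a).val * q.1.val)) • et p q := by
  conv_lhs => unfold et
  rw [Matrix.mulVec_single_one]
  ext b
  simp only [Pi.smul_apply, et_apply, smul_eq_mul, Matrix.col_apply, rhoMat, Fin.prod_univ_two]
  by_cases h : b 0 = p ∧ b 1 = q
  · rw [if_pos h, if_pos]
    · simp [h.1, h.2, rotE]
    · exact tidx_ext h.1 h.2
  · rw [if_neg h, if_neg]
    · simp
    · rintro rfl; exact h ⟨rfl, rfl⟩

lemma rho_ref_et (ζ : ℂ) (a : ZMod e) (p q : BIdx e m) :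
    (rhoMat e 2 ζ m (refE e a)).mulVec (et p q) =
      (ζ ^ (a.val * q.1.val) * ζ ^ ((-a).val * p.1.val)) • et q p := by
  conv_lhs => unfold et
  rw [Matrix.mulVec_single_one]
  ext b
  simp only [Pi.smul_apply, et_apply, smul_eq_mul, Matrix.col_apply, rhoMat, Fin.prod_univ_two]
  by_cases h : b 0 = q ∧ b 1 = p
  · rw [if_pos h, if_pos]
    · simp [h.1, h.2, refE]
    · refine tidx_ext ?_ ?_
      · simp [refE, h.1]
      · simp [refE, h.2]
  · rw [if_neg h, if_neg]
    · simp
    · rintro rfl; apply h; simp [refE]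

lemma et_ne_zero (p q : BIdx e m) : et p q ≠ 0 := by
  intro h
  have := congrFun h ![p, q]
  simp [et] at this

lemma et_combo_inj (p q : BIdx e m) (hpq : p ≠ q) (x y x' y' : ℂ)
    (h : x • et p q + y • et q p = x' • et p q + y' • et q p) : x = x' ∧ y = y' := by
  have h1 := congrFun h ![p, q]
  have h2 := congrFun h ![q, p]
  simp [et_apply, hpq, hpq.symm] at h1 h2
  exact ⟨h1, h2⟩

/-- trace on the two dimensional span -/
lemma traceOn_plane (p q : BIdx e m) (hpq : p ≠ q) (S : Submodule ℂ (TIdx e 2 m → ℂ))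
    (hS : ∀ v, v ∈ S ↔ ∃ x y : ℂ, v = x • et p q + y • et q p)
    (f : (TIdx e 2 m → ℂ) →ₗ[ℂ] (TIdx e 2 m → ℂ)) (A B C D : ℂ)
    (h1 : f (et p q) = A • et p q + B • et q p) (h2 : f (et q p) = C • et p q + D • et q p) :
    traceOn S f = A + D := by
  let φ : (Fin 2 → ℂ) →ₗ[ℂ] (TIdx e 2 m → ℂ) :=
    { toFun := fun u => u 0 • et p q + u 1 • et q p
      map_add' := fun u v => by simp only [Pi.add_apply, add_smul]; abel
      map_smul' := fun c u => by simp [mul_smul] }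
  rw [traceOn_range φ _ S _ f (Matrix.toLin' !![A, C; B, D])]
  · rw [Matrix.trace_toLin'_eq]
    simp [Matrix.trace_fin_two]
  · intro u
    change f (u 0 • et p q + u 1 • et q p) = _
    rw [map_add, map_smul, map_smul, h1, h2]
    simp only [φ, LinearMap.coe_mk, AddHom.coe_mk, Matrix.toLin'_apply]
    simp [Matrix.mulVec, dotProduct, Fin.sum_univ_two]
    module
  · intro u v huv
    obtain ⟨h3, h4⟩ := et_combo_inj p q hpq _ _ _ _ huv
    funext i
    fin_cases i
    · exact h3
    · exact h4
  · ext v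
    rw [hS, LinearMap.mem_range]
    constructor
    · rintro ⟨x, y, rfl⟩; exact ⟨![x, y], by simp [φ]⟩
    · rintro ⟨u, rfl⟩; exact ⟨u 0, u 1, rfl⟩

end chars

section dihedral

variable {e : ℕ} [NeZero e] {m : ZMod e → ℕ}

lemma zeta_neg {ζ : ℂ} (hζ : IsPrimitiveRoot ζ e) (a : ZMod e) :
    ζ ^ (-a).val = (ζ ^ a.val)⁻¹ := by
  apply eq_inv_of_mul_eq_one_left
  rw [← pow_add, hζ.pow_eq_one_iff_dvd, ← ZMod.natCast_eq_zero_iff]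
  push_cast
  simp

lemma char_sgn (hmn : ∀ k, 2 ≤ m k) (hm : ∀ k, m (k + ((1 : ℕ) : ZMod e)) = m k) (ζ : ℂ)
    (a : ZMod e) :
    charExt e 2 1 m hm ζ (fun kk => if kk = 0 then ({1, 1} : Multiset ℕ) else 0) 0 (rotE e a) = 1 ∧
    charExt e 2 1 m hm ζ (fun kk => if kk = 0 then ({1, 1} : Multiset ℕ) else 0) 0 (refE e a)
      = -1 := by
  set α : ZMod e → Multiset ℕ := fun kk => if kk = 0 then ({1, 1} : Multiset ℕ) else 0 with hα
  let p : BIdx e m := ⟨0, ⟨0, by have := hmn 0; omega⟩⟩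
  let q : BIdx e m := ⟨0, ⟨1, by have := hmn 0; omega⟩⟩
  have hpq : p ≠ q := by
    intro h
    have : p.2.val = q.2.val := by rw [h]
    simp [p, q] at this
  have hw : ∀ dv, weightOf e m α dv = dv p * dv q := by
    apply weight_pair _ _ _ hpq
    intro b
    by_cases h0 : b.1 = 0
    · simp only [hα, h0, if_true]
      rw [lamOf_pair]
      congr 1
      simp only [eq_iff_iff]
      refine or_congr ⟨fun h => bidx_ext h0 h, fun h => by rw [h]⟩
        ⟨fun h => bidx_ext h0 h, fun h => by rw [h]⟩
    · simp only [hα, h0, if_false]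
      rw [lamOf_zero, if_neg]
      rintro (rfl | rfl) <;> exact h0 rfl
  have hhw := hw_iff_wedge α p q rfl rfl rfl hw
  have hc : e ∣ csize e 1 α := by
    apply dvd_csize
    intro n hn
    have := hn 0
    by_contra h
    rw [← ZMod.natCast_eq_zero_iff] at h
    simp [hα, h] at this
  have hZ : ∀ v, v ∈ ZSub e 2 1 m hm ζ α 0 ↔ ∃ x : ℂ, v = x • (et p q - et q p) := by
    intro v
    rw [ZSub_iff hm ζ α hc, hhw]
    intro v hv
    obtain ⟨x, hx⟩ := (hhw v).1 hv
    exact ⟨p, q, x, -x, by rw [hx]; module⟩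
  have hne : et p q - et q p ≠ 0 := by
    intro h
    have := congrFun h ![p, q]
    simp [et_apply, hpq] at this
  unfold charExt
  constructor
  · apply traceOn_line _ hne _ hZ
    rw [Matrix.mulVecLin_apply, Matrix.mulVec_sub, rho_rot_et, rho_rot_et]
    simp [p, q]
  · apply traceOn_line _ hne _ hZ
    rw [Matrix.mulVecLin_apply, Matrix.mulVec_sub, rho_ref_et, rho_ref_et]
    simp [p, q]

lemma char_triv (hmn : ∀ k, 2 ≤ m k) (hm : ∀ k, m (k + ((1 : ℕ) : ZMod e)) = m k) (ζ : ℂ)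
    (a : ZMod e) :
    charExt e 2 1 m hm ζ (fun kk => if kk = 0 then ({2} : Multiset ℕ) else 0) 0 (rotE e a) = 1 ∧
    charExt e 2 1 m hm ζ (fun kk => if kk = 0 then ({2} : Multiset ℕ) else 0) 0 (refE e a)
      = 1 := by
  set α : ZMod e → Multiset ℕ := fun kk => if kk = 0 then ({2} : Multiset ℕ) else 0 with hα
  let p : BIdx e m := ⟨0, ⟨0, by have := hmn 0; omega⟩⟩
  have hw : ∀ dv, weightOf e m α dv = dv p * dv p := by
    apply weight_sq
    intro b
    by_cases h0 : b.1 = 0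
    · simp only [hα, h0, if_true]
      rw [lamOf_singleton]
      congr 1
      simp only [eq_iff_iff]
      exact ⟨fun h => bidx_ext h0 h, fun h => by rw [h]⟩
    · simp only [hα, h0, if_false]
      rw [lamOf_zero, if_neg]
      rintro rfl; exact h0 rfl
  have hhw := hw_iff_sq α p rfl hw
  have hc : e ∣ csize e 1 α := by
    apply dvd_csize
    intro n hn
    have := hn 0
    by_contra h
    rw [← ZMod.natCast_eq_zero_iff] at h
    simp [hα, h] at this
  have hZ : ∀ v, v ∈ ZSub e 2 1 m hm ζ α 0 ↔ ∃ x : ℂ, v = x • (et p p) := by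
    intro v
    rw [ZSub_iff hm ζ α hc, hhw]
    intro v hv
    obtain ⟨x, hx⟩ := (hhw v).1 hv
    exact ⟨p, p, x, 0, by rw [hx]; module⟩
  unfold charExt
  constructor
  · apply traceOn_line _ (et_ne_zero p p) _ hZ
    rw [Matrix.mulVecLin_apply, rho_rot_et]
    simp [p]
  · apply traceOn_line _ (et_ne_zero p p) _ hZ
    rw [Matrix.mulVecLin_apply, rho_ref_et]
    simp [p]

/-- `α_{0,j}` -/
def alphaJ (e : ℕ) [NeZero e] (j : ℕ) : ZMod e → Multiset ℕ :=
  fun kk => if kk = 0 ∨ kk = ((j : ℕ) : ZMod e) then ({1} : Multiset ℕ) else 0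

/-- first basis vector in the zero-th component -/
def pTop (hmn : ∀ k, 2 ≤ m k) (j : ZMod e) : BIdx e m := ⟨j, ⟨0, by have := hmn j; omega⟩⟩

lemma natCast_ne_zero_of {j : ℕ} (h1 : 1 ≤ j) (hj : j < e) : (j : ZMod e) ≠ 0 := by
  intro h
  rw [ZMod.natCast_eq_zero_iff] at h
  have := Nat.le_of_dvd h1 h
  omega

lemma hw_alphaJ (hmn : ∀ k, 2 ≤ m k) {j : ℕ} (h1 : 1 ≤ j) (hj : j < e) (v : TIdx e 2 m → ℂ) :
    v ∈ hwSubmodule e 2 m (alphaJ e j) ↔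
      ∃ x y : ℂ, v = x • et (pTop hmn 0) (pTop hmn (j : ZMod e))
        + y • et (pTop hmn (j : ZMod e)) (pTop hmn 0) := by
  have hpq : pTop hmn 0 ≠ pTop hmn (j : ZMod e) := by
    intro h
    exact natCast_ne_zero_of h1 hj (congrArg Sigma.fst h).symm
  apply hw_iff_tops _ _ _ hpq rfl rfl
  apply weight_pair _ _ _ hpq
  intro b
  by_cases h0 : b.1 = 0 ∨ b.1 = (j : ZMod e)
  · simp only [alphaJ, h0, if_true]
    rw [lamOf_singleton]
    congr 1
    simp only [eq_iff_iff]
    constructor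
    · intro h
      exact h0.imp (fun h' => bidx_ext h' h) (fun h' => bidx_ext h' h)
    · rintro (h | h) <;> rw [h] <;> rfl
  · simp only [alphaJ, h0, if_false]
    rw [lamOf_zero, if_neg]
    rintro (h | h)
    · exact h0 (Or.inl (by rw [h]; rfl))
    · exact h0 (Or.inr (by rw [h]; rfl))

lemma alphaJ_ne {j : ℕ} (k : ZMod e) : alphaJ e j k = alphaJ e j 0 ↔ k = 0 ∨ k = (j : ZMod e) := by
  unfold alphaJ
  by_cases h : k = 0 ∨ k = (j : ZMod e) <;> simp [h]

lemma char_mid (hmn : ∀ k, 2 ≤ m k) (hm : ∀ k, m (k + ((1 : ℕ) : ZMod e)) = m k) {ζ : ℂ}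
    (hζ : IsPrimitiveRoot ζ e) {j : ℕ} (h1 : 1 ≤ j) (hj : j < e) (h2 : 2 * j ≠ e) (a : ZMod e) :
    charExt e 2 1 m hm ζ (alphaJ e j) 0 (rotE e a) = (ζ ^ a.val) ^ j + (ζ ^ a.val)⁻¹ ^ j ∧
    charExt e 2 1 m hm ζ (alphaJ e j) 0 (refE e a) = 0 := by
  have hpq : pTop hmn 0 ≠ pTop hmn (j : ZMod e) := by
    intro h
    exact natCast_ne_zero_of h1 hj (congrArg Sigma.fst h).symm
  have h2' : ((j : ZMod e) + j) ≠ 0 := by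
    intro h
    have h' : ((2 * j : ℕ) : ZMod e) = 0 := by push_cast; linear_combination h
    rw [ZMod.natCast_eq_zero_iff] at h'
    obtain ⟨c, hc⟩ := h'
    have hc1 : c < 2 := by
      by_contra hcc
      have : e * 2 ≤ e * c := Nat.mul_le_mul_left e (by omega)
      omega
    interval_cases c <;> omega
  have hc : e ∣ csize e 1 (alphaJ e j) := by
    apply dvd_csize
    intro n hn
    rw [← ZMod.natCast_eq_zero_iff]
    have e1 := (alphaJ_ne _).1 (hn 0)
    have e2 := (alphaJ_ne _).1 ((hn j).trans ((alphaJ_ne _).2 (Or.inr rfl)))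
    rcases e1 with e1 | e1
    · simpa using e1
    · rcases e2 with e2 | e2
      · exfalso; apply h2'; linear_combination e2 - e1
      · linear_combination -e2
  have hZ : ∀ v, v ∈ ZSub e 2 1 m hm ζ (alphaJ e j) 0 ↔
      ∃ x y : ℂ, v = x • et (pTop hmn 0) (pTop hmn (j : ZMod e))
        + y • et (pTop hmn (j : ZMod e)) (pTop hmn 0) := by
    intro v
    rw [ZSub_iff hm ζ _ hc, hw_alphaJ hmn h1 hj]
    intro v hv
    obtain ⟨x, y, h⟩ := (hw_alphaJ hmn h1 hj v).1 hv
    exact ⟨_, _, x, y, h⟩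
  have hjv : ((j : ℕ) : ZMod e).val = j := ZMod.val_cast_of_lt hj
  unfold charExt
  constructor
  · rw [traceOn_plane _ _ hpq _ hZ _ ((ζ ^ a.val)⁻¹ ^ j) 0 0 ((ζ ^ a.val) ^ j), add_comm]
    · rw [Matrix.mulVecLin_apply, rho_rot_et]
      simp [pTop, hjv, pow_mul, zeta_neg hζ]
    · rw [Matrix.mulVecLin_apply, rho_rot_et]
      simp [pTop, hjv, pow_mul]
  · rw [traceOn_plane _ _ hpq _ hZ _ 0 ((ζ ^ a.val) ^ j) ((ζ ^ a.val)⁻¹ ^ j) 0, add_zero]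
    · rw [Matrix.mulVecLin_apply, rho_ref_et]
      simp [pTop, hjv, pow_mul]
    · rw [Matrix.mulVecLin_apply, rho_ref_et]
      simp [pTop, hjv, pow_mul, zeta_neg hζ]

lemma zeta_half {ζ : ℂ} (hζ : IsPrimitiveRoot ζ e) {h : ℕ} (h1 : 1 ≤ h) (he : 2 * h = e) :
    ζ ^ h = -1 := by
  have : (ζ ^ h) ^ 2 = 1 := by rw [← pow_mul, mul_comm, he, hζ.pow_eq_one]
  rcases mul_self_eq_one_iff.mp ((sq _).symm.trans this) with h' | h'
  · rw [hζ.pow_eq_one_iff_dvd] at h'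
    have := Nat.le_of_dvd h1 h'
    omega
  · exact h'

lemma char_half (hmn : ∀ k, 2 ≤ m k) (hm : ∀ k, m (k + ((1 : ℕ) : ZMod e)) = m k) {ζ : ℂ}
    (hζ : IsPrimitiveRoot ζ e) {h : ℕ} (h1 : 1 ≤ h) (he : 2 * h = e) (r : ℕ) (a : ZMod e) :
    charExt e 2 1 m hm ζ (alphaJ e h) r (rotE e a) = (ζ ^ a.val) ^ h ∧
    charExt e 2 1 m hm ζ (alphaJ e h) r (refE e a) = (-1) ^ r * (ζ ^ a.val) ^ h := by
  have hj : h < e := by omega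
  have hpq : pTop hmn 0 ≠ pTop hmn (h : ZMod e) := by
    intro h'
    exact natCast_ne_zero_of h1 hj (congrArg Sigma.fst h').symm
  have hh0 : ((h : ZMod e) + h) = 0 := by
    have : ((2 * h : ℕ) : ZMod e) = 0 := by rw [he]; simp
    push_cast at this
    linear_combination this
  have hc : csize e 1 (alphaJ e h) = h := by
    apply Nat.dvd_antisymm
    · apply csize_dvd
      intro k
      unfold alphaJ
      congr 1
      simp only [eq_iff_iff]
      rw [or_comm]
      refine or_congr ⟨fun h' => ?_, fun h' => ?_⟩ ⟨fun h' => ?_, fun h' => ?_⟩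
      · linear_combination h' + hh0
      · linear_combination h' - hh0
      · linear_combination h'
      · linear_combination h'
    · apply dvd_csize
      intro n hn
      rcases (alphaJ_ne _).1 (hn 0) with e1 | e1
      · have : (n : ZMod e) = 0 := by simpa using e1
        rw [ZMod.natCast_eq_zero_iff] at this
        exact dvd_trans ⟨2, by omega⟩ this
      · have : ((n + h : ℕ) : ZMod e) = 0 := by push_cast; linear_combination -e1
        rw [ZMod.natCast_eq_zero_iff] at this
        have h3 : h ∣ n + h := dvd_trans ⟨2, by omega⟩ this
        exact (Nat.dvd_add_left (dvd_refl h)).1 h3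
  set p := pTop hmn 0 with hp
  set q := pTop hmn (h : ZMod e) with hq
  have hiq : (tauB e 1 m hm)^[h] p = q := by
    obtain ⟨i1, i2⟩ := tauB_iter hm h p
    exact bidx_ext (by rw [i1]; simp [p, q, pTop]) (by rw [i2]; rfl)
  have hip : (tauB e 1 m hm)^[h] q = p := by
    obtain ⟨i1, i2⟩ := tauB_iter hm h q
    exact bidx_ext (by rw [i1]; simp [p, q, pTop, hh0]) (by rw [i2]; rfl)
  have hr : (-1 : ℂ) ^ r * (-1) ^ r = 1 := by rw [← mul_pow]; simp
  have hZ : ∀ v, v ∈ ZSub e 2 1 m hm ζ (alphaJ e h) r ↔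
      ∃ x : ℂ, v = x • (et p q + (-1 : ℂ) ^ r • et q p) := by
    intro v
    unfold ZSub
    rw [Submodule.mem_inf, hw_alphaJ hmn h1 hj, hc, ← hp, ← hq, mul_one, pow_mul,
      zeta_half hζ h1 he]
    constructor
    · rintro ⟨⟨x, y, rfl⟩, hv⟩
      rw [Module.End.mem_eigenspace_iff, Matrix.mulVecLin_apply, Matrix.mulVec_add,
        Matrix.mulVec_smul, Matrix.mulVec_smul, tau_pow_et, tau_pow_et, hiq, hip, add_comm,
        smul_add, smul_smul, smul_smul] at hv
      obtain ⟨-, h4⟩ := et_combo_inj p q hpq _ _ _ _ hv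
      have h5 : y = x * (-1) ^ r := by rw [h4]; linear_combination (-y) * hr
      exact ⟨x, by rw [h5]; module⟩
    · rintro ⟨x, rfl⟩
      refine ⟨⟨x, x * (-1) ^ r, by module⟩, ?_⟩
      rw [Module.End.mem_eigenspace_iff, Matrix.mulVecLin_apply, Matrix.mulVec_smul,
        Matrix.mulVec_add, Matrix.mulVec_smul, tau_pow_et, tau_pow_et, hiq, hip]
      rw [smul_add, smul_add, smul_add, smul_smul, smul_smul, smul_smul, smul_smul,
        show (-1 : ℂ) ^ r * x * (-1) ^ r = x by linear_combination x * hr, add_comm,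
        mul_comm x]
  have hne : et p q + (-1 : ℂ) ^ r • et q p ≠ 0 := by
    intro h
    have := congrFun h ![p, q]
    simp [et_apply, hpq] at this
  have hjv : ((h : ℕ) : ZMod e).val = h := ZMod.val_cast_of_lt hj
  have hinv : ((ζ ^ a.val) ^ h)⁻¹ = (ζ ^ a.val) ^ h := by
    rw [← pow_mul, mul_comm, pow_mul, zeta_half hζ h1 he, ← inv_pow]
    norm_num
  unfold charExt
  constructor
  · apply traceOn_line _ hne _ hZ
    rw [Matrix.mulVecLin_apply, Matrix.mulVec_add, Matrix.mulVec_smul, rho_rot_et, rho_rot_et]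
    simp only [p, q, pTop, hjv, pow_mul, zeta_neg hζ, ZMod.val_zero, pow_zero, one_mul, mul_one,
      inv_pow, hinv]
    module
  · apply traceOn_line _ hne _ hZ
    rw [Matrix.mulVecLin_apply, Matrix.mulVec_add, Matrix.mulVec_smul, rho_ref_et, rho_ref_et]
    simp only [p, q, pTop, hjv, pow_mul, zeta_neg hζ, ZMod.val_zero, pow_zero, one_mul, mul_one,
      inv_pow, hinv]
    rw [smul_add, smul_smul, smul_smul, mul_right_comm, hr, one_mul, add_comm, mul_comm]

/-! ### unified parametrization -/

/-- exponent -/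
def cN (e i : ℕ) : ℕ := if i = dihedralK e + 1 then 0 else min i (e / 2)

/-- rotation coefficient -/
noncomputable def cC (e i : ℕ) : ℂ :=
  if i = 0 ∨ i = dihedralK e + 1 ∨ (Even e ∧ e / 2 ≤ i) then 1 / 2 else 1

/-- reflection coefficient -/
noncomputable def cS (e i : ℕ) : ℂ :=
  if i = 0 then -1 else if i = dihedralK e + 1 then 1
  else if Even e ∧ i = e / 2 then 1 else if Even e ∧ i = e / 2 + 1 then -1 else 0

lemma char_all (he : 3 ≤ e) (hmn : ∀ k, 2 ≤ m k) (hm : ∀ k, m (k + ((1 : ℕ) : ZMod e)) = m k)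
    {ζ : ℂ} (hζ : IsPrimitiveRoot ζ e) (i : ℕ) (hi : i < dihedralK e + 2) (a : ZMod e) :
    charExt e 2 1 m hm ζ (dihedralIdx e i).1 (dihedralIdx e i).2 (rotE e a)
      = cC e i * ((ζ ^ a.val) ^ cN e i + (ζ ^ a.val)⁻¹ ^ cN e i) ∧
    charExt e 2 1 m hm ζ (dihedralIdx e i).1 (dihedralIdx e i).2 (refE e a)
      = cS e i * (ζ ^ a.val) ^ cN e i := by
  by_cases h0 : i = 0
  · subst h0
    have := char_sgn hmn hm ζ a
    simp only [dihedralIdx, if_true, cC, cN, cS, this]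
    norm_num
  by_cases hk : i = dihedralK e + 1
  · subst hk
    have := char_triv hmn hm ζ a
    simp only [dihedralIdx, if_true, cC, cN, cS, this, h0, if_false]
    norm_num
  by_cases hev : Even e
  · obtain ⟨h, hh⟩ := hev
    have hev : Even e := ⟨h, hh⟩
    have heh : e / 2 = h := by omega
    have hinv : ((ζ ^ a.val) ^ h)⁻¹ = (ζ ^ a.val) ^ h := by
      rw [← pow_mul, mul_comm, pow_mul, zeta_half hζ (by omega) (by omega), ← inv_pow]
      norm_num
    have hK : dihedralK e = h + 1 := by simp [dihedralK, hev, heh]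
    rw [hK] at hi
    by_cases h1 : i = h + 1
    · have := char_half hmn hm hζ (h := h) (by omega) (by omega) 1 a
      have hI : dihedralIdx e i = (alphaJ e h, 1) := by
        have h3 : Even e ∧ i = e / 2 + 1 := ⟨hev, by omega⟩
        unfold dihedralIdx
        rw [if_neg h0, if_neg hk, if_pos h3, heh]
        rfl
      rw [hI, this.1, this.2]
      have hn : cN e i = h := by
        unfold cN; rw [if_neg hk, heh, h1]; omega
      have hc : cC e i = 1 / 2 := by
        unfold cC; rw [if_pos]; right; right; exact ⟨hev, by omega⟩
      have hs : cS e i = -1 := by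
        unfold cS; rw [if_neg h0, if_neg hk, if_neg (by omega), if_pos ⟨hev, by omega⟩]
      rw [hn, hc, hs, inv_pow, hinv]
      constructor
      · ring
      · ring
    · have hI : dihedralIdx e i = (alphaJ e i, 0) := by
        have : ¬ (Even e ∧ i = e / 2 + 1) := by omega
        have hmin : min i (e / 2) = i := by omega
        simp only [dihedralIdx, h0, hk, if_false, this, hmin]
        rfl
      have hn : cN e i = i := by
        unfold cN; rw [if_neg hk, heh]; omega
      by_cases h2 : i = h
      · have := char_half hmn hm hζ (h := h) (by omega) (by omega) 0 a
        have hc : cC e i = 1 / 2 := by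
          unfold cC; rw [if_pos]; right; right; exact ⟨hev, by omega⟩
        have hs : cS e i = 1 := by
          unfold cS; rw [if_neg h0, if_neg hk, if_pos ⟨hev, by omega⟩]
        rw [hI, hn, hc, hs]
        dsimp only
        rw [h2, this.1, this.2, inv_pow, hinv]
        constructor
        · ring
        · ring
      · have := char_mid hmn hm hζ (j := i) (by omega) (by omega) (by omega) a
        have hc : cC e i = 1 := by
          unfold cC; rw [if_neg (by omega)]
        have hs : cS e i = 0 := by
          unfold cS; rw [if_neg h0, if_neg hk, if_neg (by omega), if_neg (by omega)]
        rw [hI, this.1, this.2, hn, hc, hs]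
        simp
  · have hodd : ¬ e % 2 = 0 := fun h => hev (Nat.even_iff.2 h)
    have hK : dihedralK e = (e - 1) / 2 := by simp [dihedralK, hev]
    rw [hK] at hi hk
    have hI : dihedralIdx e i = (alphaJ e i, 0) := by
      have hmin : min i (e / 2) = i := by omega
      simp only [dihedralIdx, h0, hK, hk, if_false, hev, false_and, hmin]
      rfl
    have hn : cN e i = i := by
      unfold cN; rw [hK, if_neg hk]; omega
    have := char_mid hmn hm hζ (j := i) (by omega) (by omega) (by omega) a
    have hc : cC e i = 1 := by
      unfold cC; rw [hK, if_neg (by tauto)]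
    have hs : cS e i = 0 := by
      unfold cS; rw [hK, if_neg h0, if_neg hk, if_neg (by tauto), if_neg (by tauto)]
    rw [hI, this.1, this.2, hn, hc, hs]
    simp

end dihedral

section molien

variable {e : ℕ} [NeZero e]

lemma perm_two (x : Equiv.Perm (Fin 2)) : x = 1 ∨ x = Equiv.swap 0 1 := by
  have h0 : x 0 = 0 ∨ x 0 = 1 := by omega
  have h1 : x 1 = 0 ∨ x 1 = 1 := by omega
  have hne : x 0 ≠ x 1 := fun h => by simpa using x.injective h
  rcases h0 with h0 | h0
  · left
    have h1 : x 1 = 1 := by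
      rcases h1 with h1 | h1
      · exact absurd (h0.trans h1.symm) hne
      · exact h1
    ext i
    fin_cases i <;> simp [h0, h1]
  · right
    have h1 : x 1 = 0 := by
      rcases h1 with h1 | h1
      · exact h1
      · exact absurd (h0.trans h1.symm) hne
    ext i
    fin_cases i <;> simp [h0, h1]

lemma mem_W (hp : e ∣ e) (w : Wt e 2) :
    w ∈ Wgrp e e 2 hp ↔ (∃ a, w = rotE e a) ∨ ∃ a, w = refE e a := by
  have hker : w ∈ Wgrp e e 2 hp ↔ (w.left 0).toAdd + (w.left 1).toAdd = 0 := by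
    unfold Wgrp
    rw [MonoidHom.mem_ker]
    have : wsumHom e e 2 hp w = Multiplicative.ofAdd ((w.left 0).toAdd + (w.left 1).toAdd) := by
      change Multiplicative.ofAdd (∑ i, ZMod.castHom hp (ZMod e) (w.left i).toAdd) = _
      rw [Fin.sum_univ_two]
      simp
    rw [this, ofAdd_eq_one]
  rw [hker]
  constructor
  · intro h
    have hl : w.left = ![Multiplicative.ofAdd (w.left 0).toAdd,
        Multiplicative.ofAdd (-(w.left 0).toAdd)] := by
      funext i
      fin_cases i
      · rfl
      · change w.left 1 = Multiplicative.ofAdd (-(w.left 0).toAdd)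
        rw [← eq_neg_of_add_eq_zero_right h]
        rfl
    rcases perm_two w.right with hr | hr
    · left
      exact ⟨(w.left 0).toAdd, SemidirectProduct.ext hl hr⟩
    · right
      exact ⟨(w.left 0).toAdd, SemidirectProduct.ext hl hr⟩
  · rintro (⟨a, rfl⟩ | ⟨a, rfl⟩) <;> simp [rotE, refE]

lemma rotE_inj {a b : ZMod e} (h : rotE e a = rotE e b) : a = b := by
  have := congrFun (congrArg SemidirectProduct.left h) 0
  simpa [rotE] using this

lemma refE_inj {a b : ZMod e} (h : refE e a = refE e b) : a = b := by
  have := congrFun (congrArg SemidirectProduct.left h) 0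
  simpa [refE] using this

lemma swap_ne_one : (Equiv.swap 0 1 : Equiv.Perm (Fin 2)) ≠ 1 := by
  intro h
  have := congrArg (fun x : Equiv.Perm (Fin 2) => x 0) h
  simp at this

lemma rotE_ne_refE (a b : ZMod e) : rotE e a ≠ refE e b := by
  intro h
  exact swap_ne_one (congrArg SemidirectProduct.right h).symm

lemma sum_coset (hp : e ∣ e) (F : Wt e 2 → ℂ) :
    ∑ w ∈ Finset.univ.filter (fun w => inCoset e e 2 hp 0 w), F w
      = ∑ a, F (rotE e a) + ∑ a, F (refE e a) := by
  have : Finset.univ.filter (fun w => inCoset e e 2 hp 0 w)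
      = (Finset.univ.image (rotE e)) ∪ (Finset.univ.image (refE e)) := by
    ext w
    have : inCoset e e 2 hp 0 w ↔ w ∈ Wgrp e e 2 hp := by
      unfold inCoset
      simp
    simp only [Finset.mem_filter, Finset.mem_univ, true_and, Finset.mem_union, Finset.mem_image]
    rw [this, mem_W]
    simp only [eq_comm]
  rw [this, Finset.sum_union, Finset.sum_image, Finset.sum_image]
  · intro a _ b _ h; exact refE_inj h
  · intro a _ b _ h; exact rotE_inj h
  · rw [Finset.disjoint_left]
    intro w h1 h2
    simp only [Finset.mem_univ, true_and, Finset.mem_image] at h1 h2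
    obtain ⟨a, rfl⟩ := h1
    obtain ⟨b, h⟩ := h2
    exact rotE_ne_refE a b h.symm

lemma card_W (hp : e ∣ e) : Nat.card (Wgrp e e 2 hp) = 2 * e := by
  have : Function.Bijective (fun s : ZMod e ⊕ ZMod e =>
      (⟨Sum.elim (rotE e) (refE e) s, (mem_W hp _).2 (by
        rcases s with a | a
        · exact Or.inl ⟨a, rfl⟩
        · exact Or.inr ⟨a, rfl⟩)⟩ : Wgrp e e 2 hp)) := by
    constructor
    · rintro (a | a) (b | b) h <;> have h' := congrArg Subtype.val h
      · exact congrArg _ (rotE_inj h')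
      · exact absurd h' (rotE_ne_refE a b)
      · exact absurd h'.symm (rotE_ne_refE b a)
      · exact congrArg _ (refE_inj h')
    · rintro ⟨w, hw⟩
      rcases (mem_W hp w).1 hw with ⟨a, rfl⟩ | ⟨a, rfl⟩
      · exact ⟨Sum.inl a, rfl⟩
      · exact ⟨Sum.inr a, rfl⟩
  rw [← Nat.card_eq_of_bijective _ this, Nat.card_sum, Nat.card_zmod]
  ring

lemma refMat_rot {ζ : ℂ} (hζ : IsPrimitiveRoot ζ e) (a : ZMod e) :
    refMat e 2 ζ (rotE e a) = !![ζ ^ a.val, 0; 0, (ζ ^ a.val)⁻¹] := by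
  ext i j
  fin_cases i <;> fin_cases j <;> simp [refMat, rotE, zmpow, zeta_neg hζ]

lemma refMat_ref {ζ : ℂ} (hζ : IsPrimitiveRoot ζ e) (a : ZMod e) :
    refMat e 2 ζ (refE e a) = !![0, ζ ^ a.val; (ζ ^ a.val)⁻¹, 0] := by
  ext i j
  fin_cases i <;> fin_cases j <;> simp [refMat, refE, zmpow, zeta_neg hζ]

lemma x_ne_zero {ζ : ℂ} (hζ : IsPrimitiveRoot ζ e) (a : ZMod e) : ζ ^ a.val ≠ 0 :=
  pow_ne_zero _ (hζ.ne_zero (NeZero.ne e))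

lemma x_ne_one {ζ : ℂ} (hζ : IsPrimitiveRoot ζ e) (a : ZMod e) (ha : a ≠ 0) : ζ ^ a.val ≠ 1 := by
  intro h
  rw [hζ.pow_eq_one_iff_dvd] at h
  have h1 := Nat.eq_zero_of_dvd_of_lt h (ZMod.val_lt a)
  exact ha ((ZMod.val_eq_zero a).1 h1)

lemma rotE_zero : rotE e 0 = 1 := by
  refine SemidirectProduct.ext ?_ rfl
  funext i
  fin_cases i
  · rfl
  · change Multiplicative.ofAdd (-(0 : ZMod e)) = 1
    simp

lemma rank_rot {ζ : ℂ} (hζ : IsPrimitiveRoot ζ e) (a : ZMod e) (ha : a ≠ 0) :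
    (refMat e 2 ζ (rotE e a) - 1).rank ≠ 1 := by
  have hu : IsUnit (refMat e 2 ζ (rotE e a) - 1) := by
    rw [Matrix.isUnit_iff_isUnit_det, isUnit_iff_ne_zero, refMat_rot hζ, Matrix.det_fin_two]
    have h1 := sub_ne_zero.2 (x_ne_one hζ a ha)
    have h2 : (ζ ^ a.val)⁻¹ - 1 ≠ 0 := sub_ne_zero.2 (by rw [Ne, inv_eq_one]; exact x_ne_one hζ a ha)
    simpa using ⟨h1, h2⟩
  rw [Matrix.rank_of_isUnit _ hu]
  simp

lemma rank_ref {ζ : ℂ} (hζ : IsPrimitiveRoot ζ e) (a : ZMod e) :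
    (refMat e 2 ζ (refE e a) - 1).rank = 1 := by
  have hx := x_ne_zero hζ a
  have h : refMat e 2 ζ (refE e a) - 1
      = Matrix.vecMulVec ![1, -(ζ ^ a.val)⁻¹] ![-1, ζ ^ a.val] := by
    rw [refMat_ref hζ]
    ext i j
    fin_cases i <;> fin_cases j <;> simp [Matrix.vecMulVec_apply, hx]
  apply le_antisymm
  · rw [h]; exact Matrix.rank_vecMulVec_le _ _
  · rw [Nat.one_le_iff_ne_zero, h]
    intro h0
    have h1 := Submodule.finrank_eq_zero.mp h0
    rw [LinearMap.range_eq_bot] at h1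
    have := congrFun (LinearMap.congr_fun h1 (Pi.single 0 1)) 0
    rw [Matrix.mulVecLin_apply, Matrix.mulVec_single_one] at this
    simp [Matrix.vecMulVec_apply] at this

lemma Nstar_eq (hp : e ∣ e) {ζ : ℂ} (hζ : IsPrimitiveRoot ζ e) : Nstar e e 2 hp ζ = e := by
  unfold Nstar
  have hne : ∀ a : ZMod e, refE e a ≠ 1 := fun a h => by
    rw [← rotE_zero] at h
    exact rotE_ne_refE _ _ h.symm
  have : Function.Bijective (fun a : ZMod e =>
      (⟨refE e a, (mem_W hp _).2 (Or.inr ⟨a, rfl⟩), hne a, rank_ref hζ a⟩ :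
        {w : Wt e 2 // w ∈ Wgrp e e 2 hp ∧ w ≠ 1 ∧ (refMat e 2 ζ w - 1).rank = 1})) := by
    constructor
    · intro a b h
      exact refE_inj (congrArg Subtype.val h)
    · rintro ⟨w, hw, h1, h2⟩
      rcases (mem_W hp w).1 hw with ⟨a, rfl⟩ | ⟨a, rfl⟩
      · by_cases ha : a = 0
        · subst ha; exact absurd rotE_zero h1
        · exact absurd h2 (rank_rot hζ a ha)
      · exact ⟨a, rfl⟩
  rw [← Nat.card_eq_of_bijective _ this, Nat.card_zmod]

/-! ### exponential sums -/

lemma sum_val (f : ℕ → ℂ) : ∑ a : ZMod e, f a.val = ∑ i ∈ Finset.range e, f i := by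
  refine Finset.sum_bij' (fun a _ => a.val) (fun i _ => (i : ZMod e)) ?_ ?_ ?_ ?_ ?_
  · intro a _; exact Finset.mem_range.2 (ZMod.val_lt a)
  · simp
  · intro a _; simp
  · intro i hi; exact ZMod.val_cast_of_lt (Finset.mem_range.1 hi)
  · simp

lemma sum_root (y : ℂ) (hy : y ^ e = 1) :
    ∑ a : ZMod e, y ^ a.val = if y = 1 then (e : ℂ) else 0 := by
  rw [sum_val (fun i => y ^ i)]
  split_ifs with h
  · simp [h]
  · have := mul_geom_sum y e
    rw [hy, sub_self] at this
    exact (mul_eq_zero.1 this).resolve_left (sub_ne_zero.2 h)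

lemma sum_orth {ζ : ℂ} (hζ : IsPrimitiveRoot ζ e) {N j : ℕ} (hN : N < e) (hj : j < e) :
    ∑ a : ZMod e, (ζ ^ a.val) ^ N * (ζ ^ a.val)⁻¹ ^ j = if j = N then (e : ℂ) else 0 := by
  have h0 : ζ ≠ 0 := hζ.ne_zero (NeZero.ne e)
  have h1 : ∀ a : ZMod e, (ζ ^ a.val) ^ N * (ζ ^ a.val)⁻¹ ^ j = (ζ ^ N * (ζ ^ j)⁻¹) ^ a.val := by
    intro a
    rw [mul_pow, inv_pow, inv_pow, ← pow_mul, ← pow_mul, ← pow_mul, ← pow_mul, mul_comm N,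
      mul_comm j]
  simp_rw [h1]
  rw [sum_root]
  · have : ζ ^ N * (ζ ^ j)⁻¹ = 1 ↔ j = N := by
      rw [mul_inv_eq_one₀ (pow_ne_zero _ h0)]
      constructor
      · intro h; exact (hζ.pow_inj hN hj h).symm
      · rintro rfl; rfl
    simp only [this]
  · rw [mul_pow, inv_pow, ← pow_mul, ← pow_mul, mul_comm N, mul_comm j, pow_mul, pow_mul,
      hζ.pow_eq_one]
    simp

/-- fake degree function -/
def FF (e : ℕ) (t : ℂ) (N : ℕ) : ℂ := t ^ N + t ^ (e - N)

lemma den_ne {t : ℂ} (hte : t ^ e ≠ 1) {x : ℂ} (hx : x ^ e = 1) : t - x ≠ 0 := by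
  intro h
  rw [sub_eq_zero.1 h] at hte
  exact hte hx

lemma kernel_expand {t : ℂ} (hte : t ^ e ≠ 1) {x : ℂ} (hx0 : x ≠ 0)
    (hx : x ^ e = 1) :
    (t ^ 2 - 1) * (t ^ e - 1) / ((t - x) * (t - x⁻¹))
      = ∑ j ∈ Finset.range e, FF e t j * x⁻¹ ^ j := by
  have hx' : x⁻¹ ^ e = 1 := by rw [inv_pow, hx, inv_one]
  have d1 := den_ne hte hx
  have d2 := den_ne hte hx'
  rw [div_eq_iff (mul_ne_zero d1 d2)]
  have s1 : (∑ j ∈ Finset.range e, (t * x⁻¹) ^ j) * (t - x) = x * (t ^ e - 1) := by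
    have := geom_sum_mul (t * x⁻¹) e
    rw [mul_pow, hx', mul_one] at this
    rw [← this]
    field_simp
  have s2 : (∑ j ∈ Finset.range e, t ^ (e - j) * x⁻¹ ^ j) * (t - x⁻¹) = t * (t ^ e - 1) := by
    have r : ∑ j ∈ Finset.range e, t ^ (e - j) * x⁻¹ ^ j
        = t * x * ∑ j ∈ Finset.range e, (t * x) ^ j := by
      rw [← Finset.sum_range_reflect, Finset.mul_sum]
      apply Finset.sum_congr rfl
      intro j hj
      have hj := Finset.mem_range.1 hj
      rw [← pow_succ', show e - (e - 1 - j) = j + 1 by omega, mul_pow]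
      congr 1
      rw [inv_pow]
      apply inv_eq_of_mul_eq_one_left
      rw [← pow_add, show j + 1 + (e - 1 - j) = e by omega, hx]
    have := geom_sum_mul (t * x) e
    rw [mul_pow, hx, mul_one] at this
    rw [r, ← this]
    field_simp
  have : ∑ j ∈ Finset.range e, FF e t j * x⁻¹ ^ j
      = ∑ j ∈ Finset.range e, (t * x⁻¹) ^ j + ∑ j ∈ Finset.range e, t ^ (e - j) * x⁻¹ ^ j := by
    rw [← Finset.sum_add_distrib]
    apply Finset.sum_congr rfl
    intro j _
    rw [FF, mul_pow]; ring
  rw [this]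
  have hxx : x * x⁻¹ = 1 := mul_inv_cancel₀ hx0
  linear_combination (-(t - x⁻¹)) * s1 - (t - x) * s2 + (t ^ e - 1) * hxx

lemma molien {ζ : ℂ} (hζ : IsPrimitiveRoot ζ e) {t : ℂ} (hte : t ^ e ≠ 1) {N : ℕ} (hN : N ≤ e) :
    ∑ a : ZMod e, (t ^ 2 - 1) * (t ^ e - 1) / ((t - ζ ^ a.val) * (t - (ζ ^ a.val)⁻¹))
      * (ζ ^ a.val) ^ N = e * FF e t N := by
  have hx : ∀ a : ZMod e, (ζ ^ a.val) ^ e = 1 := fun a => by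
    rw [← pow_mul, mul_comm, pow_mul, hζ.pow_eq_one, one_pow]
  have main : ∀ N < e, ∑ a : ZMod e, (t ^ 2 - 1) * (t ^ e - 1) /
      ((t - ζ ^ a.val) * (t - (ζ ^ a.val)⁻¹)) * (ζ ^ a.val) ^ N = e * FF e t N := by
    intro N hN
    calc _ = ∑ a : ZMod e, ∑ j ∈ Finset.range e,
          FF e t j * ((ζ ^ a.val) ^ N * (ζ ^ a.val)⁻¹ ^ j) := by
          apply Finset.sum_congr rfl
          intro a _
          rw [kernel_expand hte (x_ne_zero hζ a) (hx a), Finset.sum_mul]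
          apply Finset.sum_congr rfl
          intro j _
          ring
      _ = ∑ j ∈ Finset.range e, FF e t j * if j = N then (e : ℂ) else 0 := by
          rw [Finset.sum_comm]
          apply Finset.sum_congr rfl
          intro j hj
          rw [← Finset.mul_sum, sum_orth hζ hN (Finset.mem_range.1 hj)]
      _ = _ := by
          simp [hN, mul_comm]
  rcases hN.lt_or_eq with h | h
  · exact main N h
  · subst h
    have := main 0 (Nat.pos_of_ne_zero (NeZero.ne _))
    simp only [hx]
    simp only [pow_zero] at this
    rw [this]
    simp [FF, add_comm]

lemma molien' {ζ : ℂ} (hζ : IsPrimitiveRoot ζ e) {t : ℂ} (hte : t ^ e ≠ 1) {N : ℕ} (hN : N ≤ e) :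
    ∑ a : ZMod e, (t ^ 2 - 1) * (t ^ e - 1) / ((t - ζ ^ a.val) * (t - (ζ ^ a.val)⁻¹))
      * (ζ ^ a.val)⁻¹ ^ N = e * FF e t N := by
  rw [← molien hζ hte hN, ← Equiv.sum_comp (Equiv.neg (ZMod e))]
  apply Finset.sum_congr rfl
  intro a _
  rw [Equiv.neg_apply, zeta_neg hζ, inv_inv, mul_comm (t - (ζ ^ a.val)⁻¹)]

end molien

section omega

variable {e : ℕ} [NeZero e] {m : ZMod e → ℕ}

lemma pow_ne_one_of_tr {ζ t : ℂ}
    (htr : Transcendental (Algebra.adjoin ℚ {ζ} : Subalgebra ℚ ℂ) t) {n : ℕ} (hn : 0 < n) :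
    t ^ n ≠ 1 := by
  intro h
  apply htr
  apply IsAlgebraic.of_pow hn
  rw [h]
  exact isAlgebraic_one

lemma cN_le (i : ℕ) : 2 * cN e i ≤ e := by
  unfold cN
  split_ifs <;> omega

/-- `cS` vanishes unless the exponent is `0` or `e/2`. -/
lemma cS_ne (he : 3 ≤ e) {i : ℕ} (h : cS e i ≠ 0) : cN e i = 0 ∨ 2 * cN e i = e := by
  unfold cS at h
  unfold cN
  by_cases hev : Even e
  · have h2 := Nat.even_iff.1 hev
    by_cases h0 : i = 0
    · simp [h0]
    by_cases hk : i = dihedralK e + 1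
    · simp [hk]
    by_cases h1 : i = e / 2
    · rw [if_neg hk]; omega
    by_cases h3 : i = e / 2 + 1
    · rw [if_neg hk]; omega
    simp [h0, hk, h1, h3] at h
  · by_cases h0 : i = 0
    · simp [h0]
    by_cases hk : i = dihedralK e + 1
    · simp [hk]
    simp [h0, hk, hev] at h

lemma sum_rot {ζ : ℂ} (hζ : IsPrimitiveRoot ζ e) {t : ℂ} (hte : t ^ e ≠ 1) {n n' : ℕ}
    (hn : 2 * n ≤ e) (hn' : 2 * n' ≤ e) :
    ∑ a : ZMod e, (t ^ 2 - 1) * (t ^ e - 1) / ((t - ζ ^ a.val) * (t - (ζ ^ a.val)⁻¹))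
      * (((ζ ^ a.val) ^ n + (ζ ^ a.val)⁻¹ ^ n) * ((ζ ^ a.val) ^ n' + (ζ ^ a.val)⁻¹ ^ n'))
      = 2 * e * (FF e t (n + n') + FF e t (max n n' - min n n')) := by
  wlog hle : n' ≤ n generalizing n n'
  · have := this hn' hn (by omega)
    rw [add_comm n, max_comm, min_comm, ← this]
    apply Finset.sum_congr rfl
    intro a _
    ring
  rw [max_eq_left hle, min_eq_right hle]
  obtain ⟨c, rfl⟩ := Nat.exists_eq_add_of_le hle
  rw [show n' + c - n' = c by omega]
  have e1 := molien hζ hte (N := n' + c + n') (by omega)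
  have e2 := molien' hζ hte (N := n' + c + n') (by omega)
  have e3 := molien hζ hte (N := c) (by omega)
  have e4 := molien' hζ hte (N := c) (by omega)
  have : 2 * (e : ℂ) * (FF e t (n' + c + n') + FF e t c) = e * FF e t (n' + c + n')
    + e * FF e t (n' + c + n') + e * FF e t c + e * FF e t c := by ring
  rw [this]
  nth_rewrite 1 [← e1]
  rw [← e2]
  nth_rewrite 1 [← e3]
  rw [← e4, ← Finset.sum_add_distrib, ← Finset.sum_add_distrib, ← Finset.sum_add_distrib]
  apply Finset.sum_congr rfl
  intro a _
  have hx : (ζ ^ a.val) ^ n' * (ζ ^ a.val)⁻¹ ^ n' = 1 := by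
    rw [← mul_pow, mul_inv_cancel₀ (x_ne_zero hζ a), one_pow]
  generalize (ζ ^ a.val)⁻¹ = y at *
  generalize ζ ^ a.val = x at *
  generalize (t ^ 2 - 1) * (t ^ e - 1) / ((t - x) * (t - y)) = K
  rw [pow_add, pow_add, pow_add, pow_add]
  linear_combination (K * x ^ c + K * y ^ c) * hx

lemma sum_ref (he : 3 ≤ e) {ζ : ℂ} (hζ : IsPrimitiveRoot ζ e) (i i' : ℕ) :
    ∑ a : ZMod e, (cS e i * (ζ ^ a.val) ^ cN e i) * (cS e i' * (ζ ^ a.val) ^ cN e i')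
      = cS e i * cS e i' * if cN e i = cN e i' then (e : ℂ) else 0 := by
  have h1 : ∀ a : ZMod e, (cS e i * (ζ ^ a.val) ^ cN e i) * (cS e i' * (ζ ^ a.val) ^ cN e i')
      = cS e i * cS e i' * (ζ ^ (cN e i + cN e i')) ^ a.val := by
    intro a
    rw [← pow_mul _ (cN e i + cN e i'), mul_comm (cN e i + cN e i'), pow_mul, pow_add]
    ring
  simp_rw [h1]
  rw [← Finset.mul_sum, sum_root]
  · by_cases hs : cS e i * cS e i' = 0
    · simp [hs]
    · congr 1
      have a1 := cS_ne he (left_ne_zero_of_mul hs)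
      have a2 := cS_ne he (right_ne_zero_of_mul hs)
      congr 1
      rw [hζ.pow_eq_one_iff_dvd, eq_iff_iff]
      constructor
      · intro h
        by_contra hne
        have := Nat.le_of_dvd (by omega) h
        omega
      · intro h
        rcases a1 with a1 | a1
        · rw [← h, a1]; simp
        · rw [← h, ← two_mul, a1]
  · rw [← pow_mul, mul_comm, pow_mul, hζ.pow_eq_one, one_pow]

lemma omega_eq (he : 3 ≤ e) (hp : e ∣ e) (hmn : ∀ k, 2 ≤ m k)
    (hm : ∀ k, m (k + ((1 : ℕ) : ZMod e)) = m k)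
    {ζ : ℂ} (hζ : IsPrimitiveRoot ζ e) {t : ℂ} (hte : t ^ e ≠ 1) (ht2 : t ^ 2 ≠ 1)
    (i i' : ℕ) (hi : i < dihedralK e + 2) (hi' : i' < dihedralK e + 2) :
    t ^ Nstar e e 2 hp ζ *
        Rq e e 1 2 hp ζ t 0 (fun w =>
          charExt e 2 1 m hm ζ (dihedralIdx e i).1 (dihedralIdx e i).2 w *
            charExt e 2 1 m hm ζ (dihedralIdx e i').1 (dihedralIdx e i').2 w *
            starRingEnd ℂ (refMat e 2 ζ w).det)
      = t ^ e * (cC e i * cC e i' * (FF e t (cN e i + cN e i')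
          + FF e t (max (cN e i) (cN e i') - min (cN e i) (cN e i')))
        + (t ^ e - 1) / 2 * (cS e i * cS e i' * if cN e i = cN e i' then 1 else 0)) := by
  have he0 : (e : ℂ) ≠ 0 := Nat.cast_ne_zero.2 (NeZero.ne e)
  have ht2' : t ^ 2 - 1 ≠ 0 := sub_ne_zero.2 ht2
  rw [Nstar_eq hp hζ]
  congr 1
  unfold Rq
  rw [sum_coset, card_W]
  have hrot : ∀ a : ZMod e, (refMat e 2 ζ (rotE e a)).det = 1 := fun a => by
    rw [refMat_rot hζ, Matrix.det_fin_two]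
    simp [x_ne_zero hζ a]
  have href : ∀ a : ZMod e, (refMat e 2 ζ (refE e a)).det = -1 := fun a => by
    rw [refMat_ref hζ, Matrix.det_fin_two]
    simp [x_ne_zero hζ a]
  have hrot' : ∀ a : ZMod e, (t • (1 : Matrix (Fin 2) (Fin 2) ℂ) - refMat e 2 ζ (rotE e a)).det
      = (t - ζ ^ a.val) * (t - (ζ ^ a.val)⁻¹) := fun a => by
    rw [refMat_rot hζ, Matrix.det_fin_two]
    simp
  have href' : ∀ a : ZMod e, (t • (1 : Matrix (Fin 2) (Fin 2) ℂ) - refMat e 2 ζ (refE e a)).det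
      = t ^ 2 - 1 := fun a => by
    rw [refMat_ref hζ, Matrix.det_fin_two]
    simp [x_ne_zero hζ a, sq]
  simp only [hrot, href, hrot', href', (char_all he hmn hm hζ i hi _).1,
    (char_all he hmn hm hζ i hi _).2, (char_all he hmn hm hζ i' hi' _).1,
    (char_all he hmn hm hζ i' hi' _).2, map_one, map_neg]
  have h1 := sum_rot hζ hte (cN_le (e := e) i) (cN_le (e := e) i')
  have h2 := sum_ref he hζ i i'
  have hs : ∀ A B : ℂ, (t ^ 2 - 1) * (t ^ e - 1) * (2 * (e : ℂ))⁻¹ * (A + B)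
      = (2 * (e : ℂ))⁻¹ * ((t ^ 2 - 1) * (t ^ e - 1) * A + (t ^ 2 - 1) * (t ^ e - 1) * B) := by
    intros; ring
  have hA : (t ^ 2 - 1) * (t ^ e - 1) * ∑ a : ZMod e,
      1 * (cC e i * ((ζ ^ a.val) ^ cN e i + (ζ ^ a.val)⁻¹ ^ cN e i) *
        (cC e i' * ((ζ ^ a.val) ^ cN e i' + (ζ ^ a.val)⁻¹ ^ cN e i')) * 1)
        / ((t - ζ ^ a.val) * (t - (ζ ^ a.val)⁻¹))
      = cC e i * cC e i' * (2 * e * (FF e t (cN e i + cN e i')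
          + FF e t (max (cN e i) (cN e i') - min (cN e i) (cN e i')))) := by
    rw [← h1, Finset.mul_sum, Finset.mul_sum]
    apply Finset.sum_congr rfl
    intro a _
    ring
  have hB : (t ^ 2 - 1) * (t ^ e - 1) * ∑ a : ZMod e,
      -1 * (cS e i * (ζ ^ a.val) ^ cN e i * (cS e i' * (ζ ^ a.val) ^ cN e i') * -1) / (t ^ 2 - 1)
      = (t ^ e - 1) * (cS e i * cS e i' * if cN e i = cN e i' then (e : ℂ) else 0) := by
    rw [← h2, Finset.mul_sum, Finset.mul_sum]
    apply Finset.sum_congr rfl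
    intro a _
    field_simp
  have hC : (ζ ^ (0 * 1) * t ^ (1 * 2) - 1) * ∏ i ∈ Finset.Icc 1 (2 - 1), (t ^ (e * i) - 1)
      = (t ^ 2 - 1) * (t ^ e - 1) := by simp
  rw [hC]
  push_cast
  rw [hs, hA, hB]
  split_ifs
  · field_simp
  · field_simp
    ring

end omega

section FinalAlgebra

theorem green_kernel (h : ℕ) (x y U : ℕ → ℂ) (hx : ∀ i, x i ≠ 0) (hy : y h ≠ 0)
    (hD : ∀ i, 1 ≤ i → i < h → y i * x (i + 1) - x i * y (i + 1) ≠ 0)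
    (heq : ∀ i, 1 ≤ i → i ≤ h →
      ∑ a ∈ Finset.Icc 1 h, U a * (x (min a i) * y (max a i)) = 0) :
    ∀ i, 1 ≤ i → i ≤ h → U i = 0 := by
  intro i
  induction i using Nat.strong_induction_on with
  | _ i ih =>
    intro h1 hih
    have e1 := heq i h1 hih
    have c1 : ∑ a ∈ Finset.Icc 1 h, U a * (x (min a i) * y (max a i)) =
        U i * (x i * y i) + x i * ∑ a ∈ Finset.Icc 1 h, (if i < a then U a * y a else 0) := by
      rw [Finset.mul_sum]
      have : U i * (x i * y i) =
          ∑ a ∈ Finset.Icc 1 h, if a = i then U i * (x i * y i) else 0 := by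
        rw [Finset.sum_ite_eq' (Finset.Icc 1 h) i (fun _ => U i * (x i * y i)), if_pos (Finset.mem_Icc.2 ⟨h1, hih⟩)]
      rw [this, ← Finset.sum_add_distrib]
      refine Finset.sum_congr rfl fun a ha => ?_
      rw [Finset.mem_Icc] at ha
      rcases lt_trichotomy a i with hlt | heq' | hgt
      · rw [ih a hlt ha.1 ha.2, if_neg hlt.ne, if_neg (by omega)]; ring
      · subst heq'; simp
      · rw [if_neg hgt.ne', if_pos hgt, min_eq_right hgt.le, max_eq_left hgt.le]; ring
    rw [c1] at e1
    rcases Nat.lt_or_ge i h with hlt | hge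
    · have e2 := heq (i + 1) (by omega) (by omega)
      have c2 : ∑ a ∈ Finset.Icc 1 h, U a * (x (min a (i+1)) * y (max a (i+1))) =
          U i * (x i * y (i + 1)) +
            x (i + 1) * ∑ a ∈ Finset.Icc 1 h, (if i < a then U a * y a else 0) := by
        rw [Finset.mul_sum]
        have : U i * (x i * y (i + 1)) =
            ∑ a ∈ Finset.Icc 1 h, if a = i then U i * (x i * y (i + 1)) else 0 := by
          rw [Finset.sum_ite_eq' (Finset.Icc 1 h) i (fun _ => U i * (x i * y (i + 1))), if_pos (Finset.mem_Icc.2 ⟨h1, hih⟩)]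
        rw [this, ← Finset.sum_add_distrib]
        refine Finset.sum_congr rfl fun a ha => ?_
        rw [Finset.mem_Icc] at ha
        rcases lt_trichotomy a i with hl | hl | hgt
        · rw [ih a hl ha.1 ha.2, if_neg hl.ne, if_neg (by omega)]; ring
        · subst hl; simp
        · rw [if_neg hgt.ne', if_pos hgt, min_eq_right (by omega : i + 1 ≤ a),
            max_eq_left (by omega : i + 1 ≤ a)]; ring
      rw [c2] at e2
      have : U i * (x i * (y i * x (i + 1) - x i * y (i + 1))) = 0 := by
        linear_combination x (i + 1) * e1 - x i * e2
      rcases mul_eq_zero.1 this with h0 | h0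
      · exact h0
      · exact absurd h0 (mul_ne_zero (hx i) (hD i h1 hlt))
    · have hh : i = h := by omega
      subst hh
      have z : ∑ a ∈ Finset.Icc 1 i, (if i < a then U a * y a else 0) = 0 := by
        refine Finset.sum_eq_zero fun a ha => ?_
        rw [Finset.mem_Icc] at ha
        rw [if_neg (by omega)]
      rw [z, mul_zero, add_zero] at e1
      rcases mul_eq_zero.1 e1 with h0 | h0
      · exact h0
      · exact absurd h0 (mul_ne_zero (hx i) hy)

theorem sum_range_split (f : ℕ → ℂ) (K : ℕ) :
    ∑ i ∈ Finset.range (K + 2), f i = f 0 + (∑ i ∈ Finset.Icc 1 K, f i) + f (K + 1) := by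
  induction K with
  | zero => simp [Finset.sum_range_succ]
  | succ K ih =>
    rw [Finset.sum_range_succ, ih, Finset.sum_Icc_succ_top (by omega)]; ring

theorem double_split (K : ℕ) (P Λ : ℕ → ℕ → ℂ)
    (h0 : ∀ a, 1 ≤ a → a ≤ K → Λ 0 a = 0 ∧ Λ a 0 = 0 ∧ Λ (K+1) a = 0 ∧ Λ a (K+1) = 0)
    (h1 : Λ 0 (K+1) = 0) (h2 : Λ (K+1) 0 = 0) (i i' : ℕ) :
    (∑ i₁ ∈ Finset.range (K + 2), ∑ i₂ ∈ Finset.range (K + 2), P i i₁ * Λ i₁ i₂ * P i' i₂) =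
    P i 0 * Λ 0 0 * P i' 0 +
      (∑ a ∈ Finset.Icc 1 K, ∑ b ∈ Finset.Icc 1 K, P i a * Λ a b * P i' b) +
      P i (K+1) * Λ (K+1) (K+1) * P i' (K+1) := by
  rw [sum_range_split]
  congr 1
  · congr 1
    · rw [sum_range_split, h1, Finset.sum_eq_zero]
      · ring
      · intro a ha
        rw [Finset.mem_Icc] at ha
        rw [(h0 a ha.1 ha.2).1]; ring
    · refine Finset.sum_congr rfl fun a ha => ?_
      rw [Finset.mem_Icc] at ha
      rw [sum_range_split, (h0 a ha.1 ha.2).2.1, (h0 a ha.1 ha.2).2.2.2]; ring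
  · rw [sum_range_split, h2, Finset.sum_eq_zero]
    · ring
    · intro a ha
      rw [Finset.mem_Icc] at ha
      rw [(h0 a ha.1 ha.2).2.2.1]; ring

/-- the product formula for `F`. -/
theorem FF_mul (e : ℕ) (t : ℂ) (a b : ℕ) (ha : 2 * a ≤ e) (hb : 2 * b ≤ e) :
    t ^ e * (FF e t (a + b) + FF e t (max a b - min a b)) - FF e t a * FF e t b =
      (t ^ e - 1) * (t ^ min a b * FF e t (max a b)) := by
  wlog hab : a ≤ b generalizing a b
  · have := this b a hb ha (by omega)
    rw [max_comm a b, min_comm a b, add_comm a b]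
    linear_combination this
  rw [max_eq_right hab, min_eq_left hab]
  obtain ⟨d, rfl⟩ := Nat.exists_eq_add_of_le hab
  obtain ⟨f, rfl⟩ := Nat.exists_eq_add_of_le (show 2 * (a + d) ≤ e from hb)
  unfold FF
  have e1 : 2 * (a + d) + f - (a + (a + d)) = d + f := by omega
  have e2 : a + d - a = d := by omega
  have e3 : 2 * (a + d) + f - d = 2 * a + d + f := by omega
  have e4 : 2 * (a + d) + f - a = a + 2 * d + f := by omega
  have e5 : 2 * (a + d) + f - (a + d) = a + d + f := by omega
  rw [e1, e2, e3, e4, e5]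
  ring

/-- the kernel of the middle block is trivial. -/
theorem middle_kernel (he : 3 ≤ e) (t : ℂ) (ht0 : t ≠ 0) (hte : t ^ e ≠ 1) (ht2 : t ^ 2 ≠ 1)
    (u : ℕ → ℂ)
    (hu : ∀ j, 1 ≤ j → j ≤ dihedralK e → ∑ a ∈ Finset.Icc 1 (dihedralK e), u a *
      (cC e a * cC e j * (t ^ min (cN e a) (cN e j) * FF e t (max (cN e a) (cN e j))) +
        t ^ e / 2 * (cS e a * cS e j * if cN e a = cN e j then 1 else 0)) = 0) :
    ∀ a, 1 ≤ a → a ≤ dihedralK e → u a = 0 := by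
  have hyh : FF e t (e / 2) ≠ 0 := by
    unfold FF
    intro h0
    have : t ^ (e / 2) * (1 + t ^ (e - e / 2 - e / 2)) = 0 := by
      rw [mul_add, ← pow_add, mul_one]
      rw [show e / 2 + (e - e / 2 - e / 2) = e - e / 2 by omega]; exact h0
    rcases mul_eq_zero.1 this with h1 | h1
    · exact pow_ne_zero _ ht0 h1
    · rcases (by omega : e - e / 2 - e / 2 = 0 ∨ e - e / 2 - e / 2 = 1) with h2 | h2
      · rw [h2] at h1; norm_num at h1
      · rw [h2, pow_one] at h1
        apply ht2
        rw [show t = -1 by linear_combination h1]; norm_num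
  have hD : ∀ i, 1 ≤ i → i < e / 2 →
      FF e t i * t ^ (i + 1) - t ^ i * FF e t (i + 1) ≠ 0 := by
    intro i h1 h2
    obtain ⟨f, hf⟩ := Nat.exists_eq_add_of_le (show i + 1 ≤ e by omega)
    have : FF e t i * t ^ (i + 1) - t ^ i * FF e t (i + 1) = t ^ (i + f) * (t ^ 2 - 1) := by
      unfold FF
      rw [show e - i = f + 1 by omega, show e - (i + 1) = f by omega]
      ring
    rw [this]
    exact mul_ne_zero (pow_ne_zero _ ht0) (sub_ne_zero.2 ht2)
  by_cases hev : Even e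
  · have hK : dihedralK e = e / 2 + 1 := by simp [dihedralK, hev]
    have h2 : 2 ≤ e / 2 := by
      obtain ⟨r, hr⟩ := hev; omega
    obtain ⟨h, hh⟩ := Nat.exists_eq_add_of_le' (show 1 ≤ e / 2 by omega)
    -- values
    have vN : ∀ a, a ≤ h + 1 → cN e a = a := by
      intro a ha
      rw [cN, if_neg (by omega), min_eq_left (by omega)]
    have vN' : cN e (h + 2) = h + 1 := by
      rw [cN, if_neg (by omega), min_eq_right (by omega), hh]
    have vC : ∀ a, 1 ≤ a → a ≤ h → cC e a = 1 := by
      intro a ha1 ha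
      rw [cC, if_neg]
      rintro (h0 | h0 | ⟨_, h0⟩) <;> omega
    have vC1 : cC e (h + 1) = 1 / 2 := by
      rw [cC, if_pos]; exact Or.inr (Or.inr ⟨hev, by omega⟩)
    have vC2 : cC e (h + 2) = 1 / 2 := by
      rw [cC, if_pos]; exact Or.inr (Or.inr ⟨hev, by omega⟩)
    have vS : ∀ a, 1 ≤ a → a ≤ h → cS e a = 0 := by
      intro a ha1 ha
      rw [cS, if_neg (by omega), if_neg (by omega), if_neg (by rintro ⟨_, h0⟩; omega),
        if_neg (by rintro ⟨_, h0⟩; omega)]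
    have vS1 : cS e (h + 1) = 1 := by
      rw [cS, if_neg (by omega), if_neg (by omega), if_pos ⟨hev, by omega⟩]
    have vS2 : cS e (h + 2) = -1 := by
      rw [cS, if_neg (by omega), if_neg (by omega), if_neg (by rintro ⟨_, h0⟩; omega),
        if_pos ⟨hev, by omega⟩]
    rw [hK, hh] at hu ⊢
    rw [hh] at hyh hD
    have E1 := hu (h + 1) (by omega) (by omega)
    have E2 := hu (h + 2) (by omega) (by omega)
    have key : ∀ j, 1 ≤ j → j ≤ h + 1 → ∀ v : ℂ, ∑ a ∈ Finset.Icc 1 h, u a *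
      (cC e a * v * (t ^ min (cN e a) (cN e j) * FF e t (max (cN e a) (cN e j))) +
        t ^ e / 2 * (cS e a * cS e j * if cN e a = cN e j then 1 else 0)) =
        v * ∑ a ∈ Finset.Icc 1 h, u a * (t ^ min a j * FF e t (max a j)) := by
      intro j hj1 hj2 v
      rw [Finset.mul_sum]
      refine Finset.sum_congr rfl fun a ha => ?_
      rw [Finset.mem_Icc] at ha
      rw [vC a ha.1 ha.2, vS a ha.1 ha.2, vN a (by omega), vN j hj2]; ring
    have key2 : ∑ a ∈ Finset.Icc 1 h, u a *
      (cC e a * cC e (h+2) * (t ^ min (cN e a) (cN e (h+2)) * FF e t (max (cN e a) (cN e (h+2)))) +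
        t ^ e / 2 * (cS e a * cS e (h+2) * if cN e a = cN e (h+2) then 1 else 0)) =
        1 / 2 * ∑ a ∈ Finset.Icc 1 h, u a * (t ^ min a (h+1) * FF e t (max a (h+1))) := by
      rw [Finset.mul_sum]
      refine Finset.sum_congr rfl fun a ha => ?_
      rw [Finset.mem_Icc] at ha
      rw [vC a ha.1 ha.2, vS a ha.1 ha.2, vN a (by omega), vN', vC2]; ring
    rw [Finset.sum_Icc_succ_top (by omega), Finset.sum_Icc_succ_top (by omega),
      key (h+1) (by omega) le_rfl] at E1
    rw [Finset.sum_Icc_succ_top (by omega), Finset.sum_Icc_succ_top (by omega), key2] at E2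
    rw [show h + 1 + 1 = h + 2 from rfl] at E1 E2
    rw [vC1, vC2, vS1, vS2, vN _ le_rfl, vN', if_pos rfl] at E1 E2
    have hte0 : t ^ e ≠ 0 := pow_ne_zero _ ht0
    have udiff : u (h + 1) = u (h + 2) := by
      have : t ^ e * (u (h + 1) - u (h + 2)) = 0 := by linear_combination E1 - E2
      rcases mul_eq_zero.1 this with h0 | h0
      · exact absurd h0 hte0
      · exact sub_eq_zero.1 h0
    have gk := green_kernel (h + 1) (fun i => t ^ i) (FF e t) u
      (fun i => pow_ne_zero _ ht0) hyh hD (by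
        intro i hi1 hi2
        rw [Finset.sum_Icc_succ_top (by omega)]
        rcases Nat.lt_or_ge h i with hgt | hle
        · have : i = h + 1 := by omega
          subst this
          rw [← udiff] at E1
          linear_combination 2 * E1
        · have E := hu i hi1 (by omega)
          rw [Finset.sum_Icc_succ_top (by omega), Finset.sum_Icc_succ_top (by omega),
            key i hi1 hi2] at E
          rw [show h + 1 + 1 = h + 2 from rfl] at E
          rw [vC1, vC2, vS1, vS2, vN _ le_rfl, vN', vN i hi2, vS i hi1 hle, vC i hi1 hle,
            ← udiff] at E
          linear_combination E)
    intro a ha1 ha2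
    rcases Nat.lt_or_ge (h + 1) a with hgt | hle
    · have : a = h + 2 := by omega
      rw [this, ← udiff]; exact gk _ (by omega) le_rfl
    · exact gk a ha1 hle
  · have hodd : e % 2 = 1 := by
      rcases Nat.even_or_odd e with h0 | h0
      · exact absurd h0 hev
      · exact Nat.odd_iff.1 h0
    have hK : dihedralK e = e / 2 := by simp only [dihedralK, hev, if_false]; omega
    have vN : ∀ a, a ≤ e / 2 → cN e a = a := by
      intro a ha
      rw [cN, if_neg (by omega), min_eq_left (by omega)]
    have vC : ∀ a, 1 ≤ a → a ≤ e / 2 → cC e a = 1 := by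
      intro a ha1 ha
      rw [cC, if_neg]
      rintro (h0 | h0 | ⟨h0, _⟩)
      · omega
      · omega
      · exact hev h0
    have vS : ∀ a, 1 ≤ a → a ≤ e / 2 → cS e a = 0 := by
      intro a ha1 ha
      rw [cS, if_neg (by omega), if_neg (by omega), if_neg (fun h0 => hev h0.1),
        if_neg (fun h0 => hev h0.1)]
    rw [hK] at hu ⊢
    refine green_kernel (e / 2) (fun i => t ^ i) (FF e t) u
      (fun i => pow_ne_zero _ ht0) hyh hD ?_
    intro i hi1 hi2
    rw [← hu i hi1 hi2]
    refine Finset.sum_congr rfl fun a ha => ?_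
    rw [Finset.mem_Icc] at ha
    rw [vC a ha.1 ha.2, vC i hi1 hi2, vS a ha.1 ha.2, vN a ha.2, vN i hi2]; ring

end FinalAlgebra

/-- Lemma 5.4, after Geck–Malle.  Let `W = G(e,e,2)` be
the dihedral group of order `2e` and `q = 0`.  Any block lower triangular
solution `P = (p_{z,z'})`, `Λ` of the matrix equation `PΛᵗP = Ω` of (4.3.2)
(diagonal blocks `t^e, tI_k, 1` for the similarity classes `ℱ_1, ℱ_2, ℱ_3`
of `a`-values `e, 1, 0`) is given by:
`ᵗP_{21} = (t+t^{e-1}, …, t^m+t^{m+1})` (`e = 2m+1`), resp.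
`(t+t^{e-1}, …, t^{m-1}+t^{m+1}, t^m, t^m)` (`e = 2m`);
`p_{31} = 1`, `P_{32} = (1,0,…,0)`; and `λ_{11} = 1`,
`(Λ_{22})_1 = t⁻¹(t^e-1)·ᵗP_{21}`, `λ_{33} = t^{e-2}(t^2-1)(t^e-1)`. -/
theorem statement18 (e : ℕ) [NeZero e] (he : 3 ≤ e) (hp : e ∣ e)
    (ζ : ℂ) (hζ : IsPrimitiveRoot ζ e) (t : ℂ) (ht0 : t ≠ 0)
    (htr : Transcendental (Algebra.adjoin ℚ {ζ} : Subalgebra ℚ ℂ) t)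
    (m : ZMod e → ℕ) (hmn : ∀ k, 2 ≤ m k) (hm : ∀ k, m (k + ((1 : ℕ) : ZMod e)) = m k)
    (P Λ : ℕ → ℕ → ℂ)
    -- P is block lower unitriangular w.r.t. the order and the similarity
    -- classes, with diagonal entries t^{a(z)} :
    (hPtri : ∀ i < dihedralK e + 2, ∀ i' < dihedralK e + 2,
      P i i' ≠ 0 → i = i' ∨ dihedralClass e i' < dihedralClass e i)
    (hPdiag : ∀ i < dihedralK e + 2,
      P i i = t ^ (if i = 0 then e else if i = dihedralK e + 1 then 0 else 1))
    -- Λ is block diagonal w.r.t. the similarity classes :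
    (hΛblock : ∀ i < dihedralK e + 2, ∀ i' < dihedralK e + 2,
      dihedralClass e i ≠ dihedralClass e i' → Λ i i' = 0)
    -- the matrix equation P Λ ᵗP = Ω, with ω_{z,z'} = t^{N*} R_0(χ^z ⊗ χ^{z'} ⊗ conj det_M) :
    (hPΛP : ∀ i < dihedralK e + 2, ∀ i' < dihedralK e + 2,
      (∑ i₁ ∈ Finset.range (dihedralK e + 2), ∑ i₂ ∈ Finset.range (dihedralK e + 2),
        P i i₁ * Λ i₁ i₂ * P i' i₂) =
      t ^ Nstar e e 2 hp ζ *
        Rq e e 1 2 hp ζ t 0 (fun w =>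
          charExt e 2 1 m hm ζ (dihedralIdx e i).1 (dihedralIdx e i).2 w *
            charExt e 2 1 m hm ζ (dihedralIdx e i').1 (dihedralIdx e i').2 w *
            starRingEnd ℂ (refMat e 2 ζ w).det)) :
    -- the first column (the fake degrees): ᵗP_{21} and p_{31}
    (∀ i, 1 ≤ i → i ≤ dihedralK e →
      P i 0 = if Even e ∧ (i = e / 2 ∨ i = e / 2 + 1) then t ^ (e / 2)
        else t ^ i + t ^ (e - i))
    ∧ (P (dihedralK e + 1) 0 = 1)
    -- P_{32} = (1, 0, …, 0)
    ∧ (P (dihedralK e + 1) 1 = 1)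
    ∧ (∀ i, 2 ≤ i → i ≤ dihedralK e → P (dihedralK e + 1) i = 0)
    -- the stated part of Λ
    ∧ (Λ 0 0 = 1)
    ∧ (∀ i, 1 ≤ i → i ≤ dihedralK e → Λ 1 i = t⁻¹ * (t ^ e - 1) * P i 0)
    ∧ (Λ (dihedralK e + 1) (dihedralK e + 1) = t ^ (e - 2) * (t ^ 2 - 1) * (t ^ e - 1)) := by
  have hte : t ^ e ≠ 1 := pow_ne_one_of_tr htr (by omega)
  have ht2 : t ^ 2 ≠ 1 := pow_ne_one_of_tr htr (by omega)
  have hte0 : t ^ e ≠ 0 := pow_ne_zero _ ht0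
  have hK1 : 1 ≤ dihedralK e := by
    unfold dihedralK; split_ifs <;> omega
  have hF0 : FF e t 0 = 1 + t ^ e := by simp [FF]
  have hΩ := fun i hi i' hi' => (hPΛP i hi i' hi').trans
    (omega_eq he hp hmn hm hζ hte ht2 i i' hi hi')
  clear hPΛP
  have hmk := middle_kernel he t ht0 hte ht2
  have hN0 : cN e 0 = 0 := by simp [cN]
  have hNK : cN e (dihedralK e + 1) = 0 := by simp [cN]
  have hC0 : cC e 0 = 1 / 2 := by simp [cC]
  have hCK : cC e (dihedralK e + 1) = 1 / 2 := by simp [cC]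
  have hS0 : cS e 0 = -1 := by simp [cS]
  have hSK : cS e (dihedralK e + 1) = 1 := by simp [cS]
  have hNpos : ∀ i, 1 ≤ i → i ≤ dihedralK e → cN e i ≠ 0 := by
    intro i h1 h2
    rw [cN, if_neg (by omega)]; omega
  have hN1 : cN e 1 = 1 := by rw [cN, if_neg (by omega)]; omega
  have hC1 : cC e 1 = 1 := by
    rw [cC, if_neg]
    rintro (h | h | ⟨⟨r, hr⟩, h⟩) <;> omega
  have hS1 : cS e 1 = 0 := by
    rw [cS, if_neg (by omega), if_neg (by omega), if_neg (by rintro ⟨⟨r, hr⟩, h⟩; omega),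
      if_neg (by rintro ⟨_, h⟩; omega)]
  have hPi0 : ∀ i, 1 ≤ i → i ≤ dihedralK e → cC e i * FF e t (cN e i) =
      if Even e ∧ (i = e / 2 ∨ i = e / 2 + 1) then t ^ (e / 2) else t ^ i + t ^ (e - i) := by
    intro i h1 h2
    split_ifs with hc
    · obtain ⟨⟨r, hr⟩, hc⟩ := hc
      rw [cC, if_pos (Or.inr (Or.inr ⟨⟨r, hr⟩, by omega⟩)), cN, if_neg (by omega),
        min_eq_right (by omega), FF, show e - e / 2 = e / 2 by omega]
      ring
    · have hlt : i ≤ e / 2 ∧ ¬ (Even e ∧ e / 2 ≤ i) := by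
        unfold dihedralK at h2
        split_ifs at h2 with hev
        · have : i < e / 2 := by
            by_contra hcon
            exact hc ⟨hev, by omega⟩
          exact ⟨by omega, fun hh => by omega⟩
        · exact ⟨by omega, fun hh => hev hh.1⟩
      rw [cC, if_neg (by rintro (h | h | h); exacts [by omega, by omega, hlt.2 h]), cN,
        if_neg (by omega), min_eq_left hlt.1, FF, one_mul]
  have hNle : ∀ i, 2 * cN e i ≤ e := fun i => cN_le i
  have hcl : ∀ i, 1 ≤ i → i ≤ dihedralK e → dihedralClass e i = 1 := by
    intro i h1 h2
    rw [dihedralClass, if_neg (by omega), if_neg (by omega)]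
  have hcl0 : dihedralClass e 0 = 0 := by simp [dihedralClass]
  have hclK : dihedralClass e (dihedralK e + 1) = 2 := by simp [dihedralClass]
  generalize dihedralK e = K at *
  have hP0 : ∀ i', 1 ≤ i' → i' ≤ K + 1 → P 0 i' = 0 := by
    intro i' h1 h2
    by_contra hne
    rcases hPtri 0 (by omega) i' (by omega) hne with h | h
    · omega
    · rw [hcl0] at h; omega
  have hPm : ∀ i, 1 ≤ i → i ≤ K → ∀ i', 1 ≤ i' → i' ≤ K + 1 → i ≠ i' → P i i' = 0 := by
    intro i h1 h2 i' h1' h2' hii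
    by_contra hne
    rcases hPtri i (by omega) i' (by omega) hne with h | h
    · exact hii h
    · rw [hcl i h1 h2] at h
      rcases Nat.lt_or_ge K i' with hl | hl
      · rw [show i' = K + 1 by omega, hclK] at h; omega
      · rw [hcl i' h1' hl] at h; omega
  have hP00 : P 0 0 = t ^ e := by rw [hPdiag 0 (by omega), if_pos rfl]
  have hPii : ∀ i, 1 ≤ i → i ≤ K → P i i = t := by
    intro i h1 h2
    rw [hPdiag i (by omega), if_neg (by omega), if_neg (by omega), pow_one]
  have hPKK : P (K + 1) (K + 1) = 1 := by
    rw [hPdiag (K + 1) (by omega), if_neg (by omega), if_pos rfl, pow_zero]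
  have hds := double_split K P Λ (by
      intro a h1 h2
      refine ⟨hΛblock _ (by omega) _ (by omega) ?_, hΛblock _ (by omega) _ (by omega) ?_,
        hΛblock _ (by omega) _ (by omega) ?_, hΛblock _ (by omega) _ (by omega) ?_⟩ <;>
      simp [hcl a h1 h2, hcl0, hclK])
    (hΛblock _ (by omega) _ (by omega) (by simp [hcl0, hclK]))
    (hΛblock _ (by omega) _ (by omega) (by simp [hcl0, hclK]))
  simp only [hds] at hΩ
  clear hds hΛblock hPtri hPdiag
  -- (0,0)
  have hL0 : Λ 0 0 = 1 := by
    have E := hΩ 0 (by omega) 0 (by omega)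
    rw [Finset.sum_eq_zero, hP0 (K + 1) (by omega) le_rfl, hP00, hN0, hC0, hS0] at E
    · simp only [if_true, add_zero, max_self, min_self, Nat.sub_zero, hF0] at E
      have : t ^ e * t ^ e * (Λ 0 0 - 1) = 0 := by linear_combination E
      rcases mul_eq_zero.1 this with h | h
      · exact absurd h (mul_ne_zero hte0 hte0)
      · exact sub_eq_zero.1 h
    · intro a ha
      rw [Finset.mem_Icc] at ha
      refine Finset.sum_eq_zero fun b hb => ?_
      rw [hP0 a ha.1 (by omega)]; ring
  -- first column
  have hcol : ∀ i, 1 ≤ i → i ≤ K → P i 0 = cC e i * FF e t (cN e i) := by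
    intro i h1 h2
    have E := hΩ i (by omega) 0 (by omega)
    rw [Finset.sum_eq_zero, hP0 (K + 1) (by omega) le_rfl, hP00, hN0, hC0, hL0,
      if_neg (hNpos i h1 h2)] at E
    · simp only [add_zero, Nat.max_zero, Nat.min_zero, Nat.sub_zero] at E
      apply mul_right_cancel₀ hte0
      linear_combination E
    · intro a ha
      rw [Finset.mem_Icc] at ha
      refine Finset.sum_eq_zero fun b hb => ?_
      rw [Finset.mem_Icc] at hb
      rw [hP0 b hb.1 (by omega)]; ring
  have hcolK : P (K + 1) 0 = 1 := by
    have E := hΩ (K + 1) (by omega) 0 (by omega)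
    rw [Finset.sum_eq_zero, hP0 (K + 1) (by omega) le_rfl, hP00, hN0, hC0, hL0, hNK, hCK,
      hSK, hS0] at E
    · simp only [if_true, add_zero, max_self, min_self, Nat.sub_zero, hF0] at E
      apply mul_right_cancel₀ hte0
      linear_combination E
    · intro a ha
      rw [Finset.mem_Icc] at ha
      refine Finset.sum_eq_zero fun b hb => ?_
      rw [Finset.mem_Icc] at hb
      rw [hP0 b hb.1 (by omega)]; ring
  -- the middle block of Λ
  have hmid : ∀ i, 1 ≤ i → i ≤ K → ∀ j, 1 ≤ j → j ≤ K → t ^ 2 * Λ i j = (t ^ e - 1) *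
      (cC e i * cC e j * (t ^ min (cN e i) (cN e j) * FF e t (max (cN e i) (cN e j))) +
        t ^ e / 2 * (cS e i * cS e j * if cN e i = cN e j then 1 else 0)) := by
    intro i h1 h2 j h1' h2'
    have E := hΩ i (by omega) j (by omega)
    rw [Finset.sum_eq_single i, Finset.sum_eq_single j, hPii i h1 h2, hPii j h1' h2',
      hPm i h1 h2 (K + 1) (by omega) le_rfl (by omega), hL0, hcol i h1 h2, hcol j h1' h2'] at E
    · linear_combination E + cC e i * cC e j * FF_mul e t (cN e i) (cN e j) (hNle i) (hNle j)
    · intro b hb hne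
      rw [Finset.mem_Icc] at hb
      rw [hPm j h1' h2' b hb.1 (by omega) hne.symm]; ring
    · intro h; exact absurd (Finset.mem_Icc.2 ⟨h1', h2'⟩) h
    · intro b hb hne
      rw [Finset.mem_Icc] at hb
      refine Finset.sum_eq_zero fun c hc => ?_
      rw [hPm i h1 h2 b hb.1 (by omega) hne.symm]; ring
    · intro h; exact absurd (Finset.mem_Icc.2 ⟨h1, h2⟩) h
  have hrow1 : ∀ j, 1 ≤ j → j ≤ K → t * Λ 1 j = (t ^ e - 1) * P j 0 := by
    intro j h1 h2
    have E := hmid 1 le_rfl hK1 j h1 h2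
    have hj := hNpos j h1 h2
    rw [hC1, hN1, hS1, min_eq_left (by omega), max_eq_right (by omega)] at E
    rw [hcol j h1 h2]
    apply mul_left_cancel₀ ht0
    linear_combination E
  -- the last row of P
  have hlast : ∀ j, 1 ≤ j → j ≤ K →
      ∑ a ∈ Finset.Icc 1 K, P (K + 1) a * Λ a j = Λ 1 j := by
    intro j h1 h2
    have E := hΩ (K + 1) (by omega) j (by omega)
    have hs : ∑ a ∈ Finset.Icc 1 K, ∑ b ∈ Finset.Icc 1 K, P (K + 1) a * Λ a b * P j b =
        (∑ a ∈ Finset.Icc 1 K, P (K + 1) a * Λ a j) * t := by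
      rw [Finset.sum_mul]
      refine Finset.sum_congr rfl fun a ha => ?_
      rw [Finset.sum_eq_single j, hPii j h1 h2]
      · intro b hb hne
        rw [Finset.mem_Icc] at hb
        rw [hPm j h1 h2 b hb.1 (by omega) hne.symm]; ring
      · intro h; exact absurd (Finset.mem_Icc.2 ⟨h1, h2⟩) h
    rw [hs, hPm j h1 h2 (K + 1) (by omega) le_rfl (by omega), hL0, hcolK, hNK, hCK,
      if_neg (hNpos j h1 h2).symm] at E
    simp only [zero_add, Nat.zero_max, Nat.zero_min, Nat.sub_zero] at E
    have E1 := hrow1 j h1 h2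
    have E2 := hcol j h1 h2
    apply mul_right_cancel₀ ht0
    linear_combination E - E1 - t ^ e * E2
  have hu := hmk (fun a => P (K + 1) a - if a = 1 then 1 else 0) (by
    intro j h1 h2
    apply mul_left_cancel₀ (sub_ne_zero.2 hte)
    rw [mul_zero, Finset.mul_sum]
    have : ∑ a ∈ Finset.Icc 1 K, (P (K + 1) a - if a = 1 then 1 else 0) * (t ^ 2 * Λ a j) = 0 := by
      have hs : ∑ a ∈ Finset.Icc 1 K, (if a = 1 then (1 : ℂ) else 0) * Λ a j = Λ 1 j := by
        rw [Finset.sum_eq_single 1]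
        · simp
        · intro b _ hb; simp [hb]
        · intro h; exact absurd (Finset.mem_Icc.2 ⟨le_rfl, hK1⟩) h
      calc _ = t ^ 2 * ((∑ a ∈ Finset.Icc 1 K, P (K + 1) a * Λ a j) -
            ∑ a ∈ Finset.Icc 1 K, (if a = 1 then (1 : ℂ) else 0) * Λ a j) := by
              rw [← Finset.sum_sub_distrib, Finset.mul_sum]
              refine Finset.sum_congr rfl fun a ha => ?_
              ring
        _ = 0 := by rw [hlast j h1 h2, hs]; ring
    refine Eq.trans ?_ this
    refine Finset.sum_congr rfl fun a ha => ?_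
    rw [Finset.mem_Icc] at ha
    rw [hmid a ha.1 ha.2 j h1 h2, mul_left_comm])
  have hlast1 : P (K + 1) 1 = 1 := by
    have := hu 1 le_rfl hK1
    simp only [if_true] at this
    exact sub_eq_zero.1 this
  have hlast2 : ∀ i, 2 ≤ i → i ≤ K → P (K + 1) i = 0 := by
    intro i h1 h2
    have := hu i (by omega) h2
    beta_reduce at this
    rwa [if_neg (by omega), sub_zero] at this
  refine ⟨fun i h1 h2 => (hcol i h1 h2).trans (hPi0 i h1 h2), hcolK, hlast1, hlast2, hL0, ?_, ?_⟩
  · intro i h1 h2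
    have E1 := hrow1 i h1 h2
    apply mul_left_cancel₀ ht0
    rw [E1, ← mul_assoc, ← mul_assoc, mul_inv_cancel₀ ht0, one_mul]
  · have E := hΩ (K + 1) (by omega) (K + 1) (by omega)
    have hs : ∑ a ∈ Finset.Icc 1 K, ∑ b ∈ Finset.Icc 1 K, P (K + 1) a * Λ a b * P (K + 1) b =
        Λ 1 1 := by
      rw [Finset.sum_eq_single 1, Finset.sum_eq_single 1, hlast1]
      · ring
      · intro b hb hne
        rw [Finset.mem_Icc] at hb
        rw [hlast2 b (by omega) hb.2]; ring
      · intro h; exact absurd (Finset.mem_Icc.2 ⟨le_rfl, hK1⟩) h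
      · intro b hb hne
        rw [Finset.mem_Icc] at hb
        refine Finset.sum_eq_zero fun c hc => ?_
        rw [hlast2 b (by omega) hb.2]; ring
      · intro h; exact absurd (Finset.mem_Icc.2 ⟨le_rfl, hK1⟩) h
    rw [hs, hPKK, hcolK, hL0, hNK, hCK, hSK] at E
    simp only [if_true, add_zero, max_self, min_self, Nat.sub_zero, hF0] at E
    have E1 := hrow1 1 le_rfl hK1
    rw [hcol 1 le_rfl hK1, hC1, hN1, FF] at E1
    obtain ⟨f, rfl⟩ := Nat.exists_eq_add_of_le' (show 2 ≤ e by omega)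
    rw [show f + 2 - 1 = f + 1 by omega] at E1
    rw [show f + 2 - 2 = f by omega]
    apply mul_left_cancel₀ ht0
    linear_combination t * E - E1

end GreenII
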